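/- Let 1 ≤ r ≤ n−1 and m ≥ 1, and let ρ = (0,…,0,m+1,…,m+1) be the antidominant composition with r parts equal to m+1. Then for every k ∈ ℤ_{≥0}^n, as Laurent polynomials in q: c^ρ_{(n−r+1,…,n)}(k_1,…,k_{n−r}, k_{n−r+1}+1,…,k_n+1) = q^{rm−(k_{n−r+1}+⋯+k_n)} · c^ρ_{(1,…,r)}(k_1+1,…,k_r+1, k_{r+1},…,k_n). -/

import Mathlib

open Finset

namespace CO

/-- The column diagram `dg'(λ)` of a composition, as a finset of boxes `(i, j)`,
`1 ≤ i ≤ n`, `1 ≤ j ≤ λ_i`. -/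
def dgF (n : ℕ) (lam : ℕ → ℕ) : Finset (ℕ × ℕ) :=
  (Finset.Icc 1 n).biUnion fun i => (Finset.Icc 1 (lam i)).image fun j => (i, j)

/-- The augmented diagram `d̂g(λ)`: one extra box `(i, 0)` below each column. -/
def augF (n : ℕ) (lam : ℕ → ℕ) : Finset (ℕ × ℕ) :=
  dgF n lam ∪ (Finset.Icc 1 n).image fun i => (i, 0)

/-- The box `d(u)` directly below a box. -/
def dbox (u : ℕ × ℕ) : ℕ × ℕ := (u.1, u.2 - 1)

/-- The augmented filling `σ̂`: equal to `σ` on positive rows and to `i` on `(i, 0)`. -/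
def aug (σ : ℕ × ℕ → ℕ) (u : ℕ × ℕ) : ℕ := if u.2 = 0 then u.1 else σ u

/-- A filling takes values in `{1, …, n}` on the diagram. -/
def IsFilling (n : ℕ) (lam : ℕ → ℕ) (σ : ℕ × ℕ → ℕ) : Prop :=
  ∀ u ∈ dgF n lam, 1 ≤ σ u ∧ σ u ≤ n

/-- Attacking boxes: same row, or consecutive rows with the lower box to the right. -/
def Attack (u v : ℕ × ℕ) : Prop :=
  u ≠ v ∧ (u.2 = v.2 ∨ (u.2 = v.2 + 1 ∧ u.1 < v.1) ∨ (v.2 = u.2 + 1 ∧ v.1 < u.1))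

/-- A non-attacking filling: `σ̂` takes distinct values on attacking pairs of the
augmented diagram. -/
def NonAttacking (n : ℕ) (lam : ℕ → ℕ) (σ : ℕ × ℕ → ℕ) : Prop :=
  ∀ u ∈ augF n lam, ∀ v ∈ augF n lam, Attack u v → aug σ u ≠ aug σ v

/-- The arm of a box `u`. -/
def armF (n : ℕ) (lam : ℕ → ℕ) (u : ℕ × ℕ) : Finset (ℕ × ℕ) :=
  ((dgF n lam).filter fun v => v.1 < u.1 ∧ v.2 = u.2 ∧ lam v.1 ≤ lam u.1) ∪
    ((augF n lam).filter fun v => u.1 < v.1 ∧ v.2 + 1 = u.2 ∧ lam v.1 < lam u.1)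

/-- `a(u) = |arm(u)|`. -/
def armCard (n : ℕ) (lam : ℕ → ℕ) (u : ℕ × ℕ) : ℕ := (armF n lam u).card

/-- The number of inversions of `σ̂`: attacking pairs `u, u'` with `σ̂(u) < σ̂(u')`
and (same row with `u` to the left, or `u'` one row above `u` strictly to the left). -/
def invCard (n : ℕ) (lam : ℕ → ℕ) (σ : ℕ × ℕ → ℕ) : ℕ :=
  ((augF n lam ×ˢ augF n lam).filter fun p =>
    aug σ p.1 < aug σ p.2 ∧
      ((p.1.2 = p.2.2 ∧ p.1.1 < p.2.1) ∨ (p.2.2 = p.1.2 + 1 ∧ p.2.1 < p.1.1))).card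

/-- The descent set of `σ̂`. -/
def desF (n : ℕ) (lam : ℕ → ℕ) (σ : ℕ × ℕ → ℕ) : Finset (ℕ × ℕ) :=
  (dgF n lam).filter fun u => aug σ (dbox u) < aug σ u

/-- The statistic `coinv(σ̂)` (as an integer). -/
def coinv (n : ℕ) (lam : ℕ → ℕ) (σ : ℕ × ℕ → ℕ) : ℤ :=
  (∑ u ∈ dgF n lam, (armCard n lam u : ℤ)) - invCard n lam σ +
    (((Finset.Icc 1 n ×ˢ Finset.Icc 1 n).filter fun p =>
      p.1 < p.2 ∧ lam p.1 ≤ lam p.2).card : ℤ) +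
    ∑ u ∈ desF n lam σ, (armCard n lam u : ℤ)

/-- The statistic `T(σ)`. -/
def Tstat (n : ℕ) (lam : ℕ → ℕ) (σ : ℕ × ℕ → ℕ) : ℤ :=
  coinv n lam σ -
    ∑ u ∈ (dgF n lam).filter fun u => aug σ u ≠ aug σ (dbox u), (armCard n lam u : ℤ)

/-- Antidominant composition: `λ_1 ≤ ⋯ ≤ λ_n`. -/
def Antidominant (n : ℕ) (lam : ℕ → ℕ) : Prop :=
  ∀ i j, 1 ≤ i → i ≤ j → j ≤ n → lam i ≤ lam j

/-- Appropriate filling: non-attacking with `T(σ) = 0`. -/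
def Appropriate (n : ℕ) (lam : ℕ → ℕ) (σ : ℕ × ℕ → ℕ) : Prop :=
  IsFilling n lam σ ∧ NonAttacking n lam σ ∧ Tstat n lam σ = 0

/-- The operation `π` on compositions: `π(λ) = (λ_n + 1, λ_1, …, λ_{n-1})`. -/
def piComp (n : ℕ) (lam : ℕ → ℕ) : ℕ → ℕ :=
  fun i => if i = 1 then lam n + 1 else lam (i - 1)

/-- The operation `π` on boxes. -/
def piBox (n : ℕ) (u : ℕ × ℕ) : ℕ × ℕ :=
  if u.1 < n then (u.1 + 1, u.2) else (1, u.2 + 1)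

/-- Extension by zero of a function defined on the diagram. -/
def ext (n : ℕ) (lam : ℕ → ℕ) (f : {u // u ∈ dgF n lam} → ℕ) : ℕ × ℕ → ℕ :=
  fun u => if h : u ∈ dgF n lam then f ⟨u, h⟩ else 0

/-- `qstat(σ) = Σ (l(u) + 1)` over boxes `u` with `σ̂(u) < σ̂(d(u))`. -/
def qstat (n : ℕ) (lam : ℕ → ℕ) (σ : ℕ × ℕ → ℕ) : ℕ :=
  ∑ u ∈ (dgF n lam).filter fun u => aug σ u < aug σ (dbox u), (lam u.1 - u.2 + 1)

end CO

namespace CO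

/-- The statistic `asc(τ) = Σ (l(u) + 1)` over boxes `u = (i, j)` with `j ≥ 2` and
`τ(u) < τ(d(u))`. -/
def ascStat (n : ℕ) (mu : ℕ → ℕ) (τ : ℕ × ℕ → ℕ) : ℕ :=
  ∑ u ∈ (dgF n mu).filter fun u => 2 ≤ u.2 ∧ τ u < τ (dbox u), (mu u.1 - u.2 + 1)

/-- The greedy rule (iii): for boxes in rows `≥ 2`, with `S = τ(arm(u)) ∪ {τ(u)}`,
`τ(u)` is the minimum of `{x ∈ S : x ≥ τ(d(u))}` if nonempty, and `min S` otherwise. -/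
def GreedyRule (n : ℕ) (mu : ℕ → ℕ) (τ : ℕ × ℕ → ℕ) : Prop :=
  ∀ u ∈ dgF n mu, 2 ≤ u.2 →
    (({x ∈ τ '' ↑(armF n mu u) ∪ {τ u} | τ (dbox u) ≤ x}.Nonempty →
        τ u = sInf {x ∈ τ '' ↑(armF n mu u) ∪ {τ u} | τ (dbox u) ≤ x}) ∧
      (¬ {x ∈ τ '' ↑(armF n mu u) ∪ {τ u} | τ (dbox u) ≤ x}.Nonempty →
        τ u = sInf (τ '' ↑(armF n mu u) ∪ {τ u})))

/-- Conditions (i)–(iv) on the fillings `τ` counted by `c_a^μ(k)`. -/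
def CCond (n : ℕ) (mu : ℕ → ℕ) (a : ℕ → ℕ) (k : ℕ → ℕ) (τ : ℕ × ℕ → ℕ) : Prop :=
  (∀ u ∈ dgF n mu, 1 ≤ τ u ∧ τ u ≤ n) ∧
    (∀ j, (j, 1) ∈ dgF n mu → τ (j, 1) = a j) ∧
    (∀ u ∈ dgF n mu, ∀ v ∈ dgF n mu, Attack u v → τ u ≠ τ v) ∧
    GreedyRule n mu τ ∧
    ∀ i, 1 ≤ i → i ≤ n → ((dgF n mu).filter fun u => τ u = i).card = k i

open Classical in
/-- The coefficient `c_a^μ(k) ∈ ℤ[q]`: the generating function `Σ_τ q^{asc(τ)}`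
over fillings satisfying (i)–(iv). -/
noncomputable def cCoef (n : ℕ) (mu : ℕ → ℕ) (a : ℕ → ℕ) (k : ℕ → ℕ) : Polynomial ℤ :=
  ∑ f ∈ (Fintype.piFinset fun _ : {u // u ∈ dgF n mu} => Finset.Icc 1 n).filter
      fun f => CCond n mu a k (ext n mu f),
    Polynomial.X ^ ascStat n mu (ext n mu f)

end CO


namespace CO

/-- number of elements of `A` that are at least `x` -/
def cnt (A : Finset ℕ) (x : ℕ) : ℕ := (A.filter fun a => x ≤ a).card

/-- number of wraps between two rows -/
def wm (n : ℕ) (A B : Finset ℕ) : ℕ :=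
  (Finset.Icc 1 (n + 1)).sup fun x => cnt A x - cnt B x

lemma le_wm {n : ℕ} (A B : Finset ℕ) {x : ℕ} (h1 : 1 ≤ x) (h2 : x ≤ n + 1) :
    cnt A x ≤ cnt B x + wm n A B := by
  have : cnt A x - cnt B x ≤ wm n A B :=
    Finset.le_sup (f := fun x => cnt A x - cnt B x) (Finset.mem_Icc.2 ⟨h1, h2⟩)
  omega

lemma wm_le {n : ℕ} {A B : Finset ℕ} {c : ℕ}
    (h : ∀ x, 1 ≤ x → x ≤ n + 1 → cnt A x ≤ cnt B x + c) : wm n A B ≤ c := by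
  apply Finset.sup_le
  intro x hx
  have := h x (Finset.mem_Icc.1 hx).1 (Finset.mem_Icc.1 hx).2
  omega

lemma cnt_succ (A : Finset ℕ) (x : ℕ) :
    cnt A x = cnt A (x + 1) + if x ∈ A then 1 else 0 := by
  unfold cnt
  split_ifs with h
  · have : (A.filter fun a => x ≤ a) = insert x (A.filter fun a => x + 1 ≤ a) := by
      ext a
      simp only [Finset.mem_filter, Finset.mem_insert]
      constructor
      · rintro ⟨h1, h2⟩
        by_cases h3 : a = x
        · exact Or.inl h3
        · exact Or.inr ⟨h1, by omega⟩
      · rintro (h1 | h1)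
        · subst h1; exact ⟨h, le_rfl⟩
        · exact ⟨h1.1, by omega⟩
    rw [this, Finset.card_insert_of_notMem (by simp)]
  · congr 1
    ext a
    simp only [Finset.mem_filter]
    constructor
    · rintro ⟨h1, h2⟩
      refine ⟨h1, ?_⟩
      by_contra h3
      have : a = x := by omega
      subst this; exact h h1
    · rintro ⟨h1, h2⟩
      exact ⟨h1, by omega⟩

/-- adjacent transposition acting on sets -/
def sw (i : ℕ) (A : Finset ℕ) : Finset ℕ := A.image (Equiv.swap i (i + 1))

lemma mem_sw (i : ℕ) (A : Finset ℕ) (a : ℕ) : a ∈ sw i A ↔ Equiv.swap i (i + 1) a ∈ A := by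
  unfold sw
  rw [Finset.mem_image]
  constructor
  · rintro ⟨b, hb, rfl⟩
    simpa using hb
  · intro h
    exact ⟨_, h, by simp⟩

lemma sw_sw (i : ℕ) (A : Finset ℕ) : sw i (sw i A) = A := by
  ext a; simp [mem_sw]

lemma cnt_sw (i : ℕ) (A : Finset ℕ) {x : ℕ} (hx : x ≠ i + 1) : cnt (sw i A) x = cnt A x := by
  unfold cnt
  apply Finset.card_bij (fun a _ => Equiv.swap i (i + 1) a)
  · intro a ha
    rw [Finset.mem_filter, mem_sw] at ha
    rw [Finset.mem_filter]
    refine ⟨ha.1, ?_⟩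
    rw [Equiv.swap_apply_def]
    split_ifs <;> omega
  · intro a _ b _ h
    exact (Equiv.swap i (i + 1)).injective h
  · intro b hb
    rw [Finset.mem_filter] at hb
    refine ⟨Equiv.swap i (i + 1) b, ?_, by simp⟩
    rw [Finset.mem_filter, mem_sw]
    refine ⟨by simpa using hb.1, ?_⟩
    rw [Equiv.swap_apply_def]
    split_ifs <;> omega

lemma sw_eq_self {i : ℕ} {A : Finset ℕ} (h : i ∈ A ↔ i + 1 ∈ A) : sw i A = A := by
  ext a
  rw [mem_sw, Equiv.swap_apply_def]
  split_ifs with h1 h2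
  · subst h1; exact h.symm
  · subst h2; exact h
  · rfl

lemma mem_sw_left (i : ℕ) (A : Finset ℕ) : i ∈ sw i A ↔ i + 1 ∈ A := by
  simp [mem_sw]

lemma mem_sw_right (i : ℕ) (A : Finset ℕ) : i + 1 ∈ sw i A ↔ i ∈ A := by
  simp [mem_sw]

lemma wm_sw_right_aux {n i : ℕ} (hi : 1 ≤ i) (hin : i < n) (A B : Finset ℕ)
    (hA : i + 1 ∈ A → i ∈ A) (hB : i ∈ B) (hB' : i + 1 ∉ B) :
    wm n A (sw i B) = wm n A B := by
  have a1 := cnt_succ A i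
  have a2 := cnt_succ A (i + 1)
  have b1 := cnt_succ B i
  have b2 := cnt_succ B (i + 1)
  have c1 := cnt_succ (sw i B) i
  have c2 := cnt_succ (sw i B) (i + 1)
  have e1 := cnt_sw i B (x := i) (by omega)
  have e2 := cnt_sw i B (x := i + 1 + 1) (by omega)
  simp only [mem_sw_left] at c1
  simp only [mem_sw_right] at c2
  simp only [hB, hB', if_true, if_false] at b1 b2 c1 c2
  apply le_antisymm
  · apply wm_le
    intro x h1 h2
    by_cases hx : x = i + 1
    · subst hx
      have := le_wm (n := n) A B (x := i) (by omega) (by omega)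
      have := le_wm (n := n) A B (x := i + 1 + 1) (by omega) (by omega)
      by_cases h3 : i + 1 ∈ A
      · simp only [h3, hA h3, if_true] at a1 a2; omega
      · simp only [h3, if_false] at a2; omega
    · rw [cnt_sw i B hx]; exact le_wm A B h1 h2
  · apply wm_le
    intro x h1 h2
    by_cases hx : x = i + 1
    · subst hx
      have := le_wm (n := n) A (sw i B) (x := i) (by omega) (by omega)
      have := le_wm (n := n) A (sw i B) (x := i + 1 + 1) (by omega) (by omega)
      by_cases h3 : i + 1 ∈ A
      · simp only [h3, hA h3, if_true] at a1 a2; omega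
      · simp only [h3, if_false] at a2; omega
    · rw [← cnt_sw i B hx]; exact le_wm A _ h1 h2

lemma wm_sw_right {n i : ℕ} (hi : 1 ≤ i) (hin : i < n) (A B : Finset ℕ)
    (hA : i + 1 ∈ A → i ∈ A) : wm n A (sw i B) = wm n A B := by
  by_cases h : i ∈ B ↔ i + 1 ∈ B
  · rw [sw_eq_self h]
  · by_cases h1 : i ∈ B
    · exact wm_sw_right_aux hi hin A B hA h1 (by tauto)
    · have := wm_sw_right_aux hi hin A (sw i B) hA (by rw [mem_sw_left]; tauto)
        (by rw [mem_sw_right]; tauto)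
      rw [sw_sw] at this
      exact this.symm

lemma wm_sw_left {n i : ℕ} (hi : 1 ≤ i) (hin : i < n) (A B : Finset ℕ)
    (hA : i ∈ A) (hA' : i + 1 ∉ A) (hB : i ∈ B → i + 1 ∈ B) :
    wm n (sw i A) B = wm n A B := by
  have a1 := cnt_succ B i
  have a2 := cnt_succ B (i + 1)
  have b1 := cnt_succ A i
  have b2 := cnt_succ A (i + 1)
  have c1 := cnt_succ (sw i A) i
  have c2 := cnt_succ (sw i A) (i + 1)
  have e1 := cnt_sw i A (x := i) (by omega)
  have e2 := cnt_sw i A (x := i + 1 + 1) (by omega)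
  simp only [mem_sw_left] at c1
  simp only [mem_sw_right] at c2
  simp only [hA, hA', if_true, if_false] at b1 b2 c1 c2
  apply le_antisymm
  · apply wm_le
    intro x h1 h2
    by_cases hx : x = i + 1
    · subst hx
      have := le_wm (n := n) A B (x := i) (by omega) (by omega)
      have := le_wm (n := n) A B (x := i + 1 + 1) (by omega) (by omega)
      by_cases h3 : i ∈ B
      · simp only [h3, hB h3, if_true] at a1 a2; omega
      · simp only [h3, if_false] at a1; omega
    · rw [cnt_sw i A hx]; exact le_wm A B h1 h2
  · apply wm_le
    intro x h1 h2
    by_cases hx : x = i + 1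
    · subst hx
      have := le_wm (n := n) (sw i A) B (x := i) (by omega) (by omega)
      have := le_wm (n := n) (sw i A) B (x := i + 1 + 1) (by omega) (by omega)
      by_cases h3 : i ∈ B
      · simp only [h3, hB h3, if_true] at a1 a2; omega
      · simp only [h3, if_false] at a1; omega
    · rw [← cnt_sw i A hx]; exact le_wm _ B h1 h2

end CO

namespace CO

/-- the transfer generating function, `Wt ℓ` has `ℓ + 1` rows and starts with `A` -/
noncomputable def Wt {R : Type*} [CommRing R] (n r : ℕ) (q : R) :
    ℕ → (ℕ → R) → Finset ℕ → R
  | 0, x, A => ∏ a ∈ A, x a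
  | l + 1, x, A => (∏ a ∈ A, x a) *
      ∑ B ∈ Finset.powersetCard r (Finset.Icc 1 n), q ^ ((l + 1) * wm n A B) * Wt n r q l x B

/-- invariance under an adjacent swap of variables -/
def Inv {R : Type*} (i : ℕ) (F : (ℕ → R) → R) : Prop :=
  ∀ x, F (fun j => x (Equiv.swap i (i + 1) j)) = F x

lemma prod_swap {R : Type*} [CommRing R] (i : ℕ) (A : Finset ℕ) (x : ℕ → R) :
    ∏ a ∈ A, x (Equiv.swap i (i + 1) a) = ∏ a ∈ sw i A, x a := by
  unfold sw
  rw [Finset.prod_image]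
  intro a _ b _ h
  exact (Equiv.swap i (i + 1)).injective h

lemma sw_mem_powersetCard {n r i : ℕ} (hi : 1 ≤ i) (hin : i < n) {B : Finset ℕ}
    (hB : B ∈ Finset.powersetCard r (Finset.Icc 1 n)) :
    sw i B ∈ Finset.powersetCard r (Finset.Icc 1 n) := by
  rw [Finset.mem_powersetCard] at hB ⊢
  refine ⟨?_, ?_⟩
  · intro a ha
    rw [mem_sw] at ha
    have := hB.1 ha
    rw [Finset.mem_Icc, Equiv.swap_apply_def] at this
    rw [Finset.mem_Icc]
    split_ifs at this <;> omega
  · unfold sw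
    rw [Finset.card_image_of_injective _ (Equiv.swap i (i + 1)).injective]
    exact hB.2

lemma sum_sw {R : Type*} [CommRing R] {n r i : ℕ} (hi : 1 ≤ i) (hin : i < n)
    (f : Finset ℕ → R) :
    ∑ B ∈ Finset.powersetCard r (Finset.Icc 1 n), f (sw i B) =
      ∑ B ∈ Finset.powersetCard r (Finset.Icc 1 n), f B := by
  apply Finset.sum_nbij' (sw i) (sw i)
  · intro B hB; exact sw_mem_powersetCard hi hin hB
  · intro B hB; exact sw_mem_powersetCard hi hin hB
  · intro B _; exact sw_sw i B
  · intro B _; exact sw_sw i B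
  · intro B _; rfl

lemma sum_inv {R : Type*} [CommRing R] [IsDomain R] [CharZero R] {n r i : ℕ}
    (hi : 1 ≤ i) (hin : i < n) (V : (ℕ → R) → Finset ℕ → R)
    (hV : ∀ A, Inv i fun x => V x A + V x (sw i A)) (c : Finset ℕ → R)
    (hc : ∀ B, c (sw i B) = c B) :
    Inv i fun x => ∑ B ∈ Finset.powersetCard r (Finset.Icc 1 n), c B * V x B := by
  have key : ∀ x, 2 * ∑ B ∈ Finset.powersetCard r (Finset.Icc 1 n), c B * V x B =
      ∑ B ∈ Finset.powersetCard r (Finset.Icc 1 n), c B * (V x B + V x (sw i B)) := by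
    intro x
    rw [two_mul]
    nth_rewrite 2 [← sum_sw hi hin]
    rw [← Finset.sum_add_distrib]
    refine Finset.sum_congr rfl fun B _ => ?_
    rw [hc]; ring
  intro x
  apply mul_left_cancel₀ (two_ne_zero (α := R))
  change 2 * ∑ B ∈ Finset.powersetCard r (Finset.Icc 1 n), c B * V _ B = _
  rw [key, key]
  refine Finset.sum_congr rfl fun B _ => ?_
  have := hV B x
  beta_reduce at this
  rw [this]

/-- the inductive property of families of functions -/
def Good {R : Type*} [CommRing R] (i : ℕ) (V : (ℕ → R) → Finset ℕ → R) : Prop :=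
  (∀ A, Inv i fun x => V x A + V x (sw i A)) ∧
  ∀ A, i ∈ A → i + 1 ∉ A → ∃ U : (ℕ → R) → R, Inv i U ∧ ∀ x, V x A = x i * U x

lemma prod_A0 {R : Type*} [CommRing R] {i : ℕ} {A : Finset ℕ} (h : i ∈ A) (x : ℕ → R) :
    ∏ a ∈ A, x a = x i * ∏ a ∈ A.erase i, x a := (Finset.mul_prod_erase A x h).symm

lemma prod_A1 {R : Type*} [CommRing R] {i : ℕ} {A : Finset ℕ} (h : i ∈ A) (h' : i + 1 ∉ A)
    (x : ℕ → R) :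
    ∏ a ∈ sw i A, x a = x (i + 1) * ∏ a ∈ A.erase i, x a := by
  have : sw i A = insert (i + 1) (A.erase i) := by
    ext a
    rw [mem_sw, Equiv.swap_apply_def, Finset.mem_insert, Finset.mem_erase]
    split_ifs with h1 h2
    · subst h1; simp [h']
    · subst h2; simp [h]
    · simp [h1, h2]
  rw [this, Finset.prod_insert]
  simp [h']

lemma inv_prod_erase {R : Type*} [CommRing R] {i : ℕ} {A : Finset ℕ} (h' : i + 1 ∉ A) :
    Inv i fun x : ℕ → R => ∏ a ∈ A.erase i, x a := by
  intro x
  refine Finset.prod_congr rfl fun a ha => ?_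
  rw [Finset.mem_erase] at ha
  beta_reduce
  rw [Equiv.swap_apply_of_ne_of_ne ha.1]
  rintro rfl
  exact h' ha.2

lemma good_zero {R : Type*} [CommRing R] (i : ℕ) :
    Good i fun (x : ℕ → R) A => ∏ a ∈ A, x a := by
  refine ⟨fun A x => ?_, fun A h h' => ⟨_, inv_prod_erase h', prod_A0 h⟩⟩
  change ∏ a ∈ A, x (Equiv.swap i (i + 1) a) + ∏ a ∈ sw i A, x (Equiv.swap i (i + 1) a) = _
  rw [prod_swap, prod_swap, sw_sw, add_comm]

lemma good_succ {R : Type*} [CommRing R] [IsDomain R] [CharZero R] {n r i : ℕ}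
    (hi : 1 ≤ i) (hin : i < n) (t : R) (V : (ℕ → R) → Finset ℕ → R) (hV : Good i V) :
    Good i fun (x : ℕ → R) A => (∏ a ∈ A, x a) *
      ∑ B ∈ Finset.powersetCard r (Finset.Icc 1 n), t ^ wm n A B * V x B := by
  classical
  have hT : ∀ A, (i + 1 ∈ A → i ∈ A) → Inv i fun x =>
      ∑ B ∈ Finset.powersetCard r (Finset.Icc 1 n), t ^ wm n A B * V x B := by
    intro A hA
    apply sum_inv hi hin V hV.1
    intro B
    rw [wm_sw_right hi hin A B hA]
  have h0 : ∀ A, i ∈ A → i + 1 ∉ A → Inv i fun x => ((∏ a ∈ A, x a) *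
      ∑ B ∈ Finset.powersetCard r (Finset.Icc 1 n), t ^ wm n A B * V x B) +
      (∏ a ∈ sw i A, x a) *
      ∑ B ∈ Finset.powersetCard r (Finset.Icc 1 n), t ^ wm n (sw i A) B * V x B := by
    intro A h h'
    choose U hU1 hU2 using hV.2
    let U' : Finset ℕ → (ℕ → R) → R := fun B =>
      if hB : i ∈ B ∧ i + 1 ∉ B then U B hB.1 hB.2 else fun _ => 0
    have hU' : ∀ B, Inv i (U' B) := by
      intro B x
      by_cases hB : i ∈ B ∧ i + 1 ∉ B
      · simp only [U', dif_pos hB]; exact hU1 B hB.1 hB.2 x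
      · simp only [U', dif_neg hB]
    let D : (ℕ → R) → R := fun x => ∑ B ∈ Finset.powersetCard r (Finset.Icc 1 n),
      (t ^ wm n (sw i A) B - t ^ wm n A B) * U' B x
    have hD : Inv i D := by
      intro x
      refine Finset.sum_congr rfl fun B _ => ?_
      rw [hU' B x]
    have hS : ∀ x, ∑ B ∈ Finset.powersetCard r (Finset.Icc 1 n), t ^ wm n (sw i A) B * V x B =
        (∑ B ∈ Finset.powersetCard r (Finset.Icc 1 n), t ^ wm n A B * V x B) + x i * D x := by
      intro x
      rw [Finset.mul_sum, ← Finset.sum_add_distrib]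
      refine Finset.sum_congr rfl fun B _ => ?_
      by_cases hB : i ∈ B ∧ i + 1 ∉ B
      · simp only [U', dif_pos hB]
        rw [hU2 B hB.1 hB.2 x]; ring
      · rw [wm_sw_left hi hin A B h h' (by tauto)]; ring
    have e1 := hT A (fun _ => h)
    have e2 := inv_prod_erase (R := R) (i := i) h'
    intro x
    have e1x := e1 x
    have e2x := e2 x
    have e3x := hD x
    beta_reduce at e1x e2x e3x ⊢
    rw [hS, hS, prod_A0 h, prod_A0 h, prod_A1 h h', prod_A1 h h', e1x, e2x, e3x,
      Equiv.swap_apply_left, Equiv.swap_apply_right]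
    ring
  refine ⟨fun A => ?_, fun A h h' => ?_⟩
  · by_cases hA : i ∈ A ↔ i + 1 ∈ A
    · intro x
      have e := hT A hA.2 x
      beta_reduce at e ⊢
      rw [sw_eq_self hA, e, prod_swap, sw_eq_self hA]
    · by_cases h : i ∈ A
      · exact h0 A h (by tauto)
      · have := h0 (sw i A) (by rw [mem_sw_left]; tauto) (by rw [mem_sw_right]; tauto)
        rw [sw_sw] at this
        intro x
        have := this x
        beta_reduce at this ⊢
        rw [add_comm, this, add_comm]
  · refine ⟨fun x => (∏ a ∈ A.erase i, x a) * ∑ B ∈ Finset.powersetCard r (Finset.Icc 1 n),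
      t ^ wm n A B * V x B, ?_, ?_⟩
    · intro x
      have e1x := hT A (fun _ => h) x
      have e2x := inv_prod_erase (R := R) (i := i) h' x
      beta_reduce at e1x e2x ⊢
      rw [e1x, e2x]
    · intro x
      beta_reduce
      rw [prod_A0 h]; ring

lemma good_Wt {R : Type*} [CommRing R] [IsDomain R] [CharZero R] {n r i : ℕ}
    (hi : 1 ≤ i) (hin : i < n) (q : R) (l : ℕ) : Good i (Wt n r q l) := by
  induction l with
  | zero => exact good_zero i
  | succ l ih =>
    have := good_succ (r := r) hi hin (q ^ (l + 1)) _ ih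
    simp only [← pow_mul] at this
    exact this

/-- total generating function -/
noncomputable def Zt {R : Type*} [CommRing R] (n r : ℕ) (q : R) (l : ℕ) (x : ℕ → R) : R :=
  ∑ B ∈ Finset.powersetCard r (Finset.Icc 1 n), Wt n r q l x B

lemma inv_Zt {R : Type*} [CommRing R] [IsDomain R] [CharZero R] {n r i : ℕ}
    (hi : 1 ≤ i) (hin : i < n) (q : R) (l : ℕ) : Inv i (Zt n r q l) := by
  have := sum_inv (r := r) hi hin _ (good_Wt (r := r) hi hin q l).1 (fun _ => 1) (fun _ => rfl)
  simp only [one_mul] at this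
  exact this

lemma Wt_congr {R : Type*} [CommRing R] {n r : ℕ} (q : R) (l : ℕ) {x y : ℕ → R}
    (h : ∀ i, 1 ≤ i → i ≤ n → x i = y i) (A : Finset ℕ) (hA : A ⊆ Finset.Icc 1 n) :
    Wt n r q l x A = Wt n r q l y A := by
  have hp : ∀ A ⊆ Finset.Icc 1 n, ∏ a ∈ A, x a = ∏ a ∈ A, y a := by
    intro A hA
    refine Finset.prod_congr rfl fun a ha => ?_
    have := Finset.mem_Icc.1 (hA ha)
    exact h a this.1 this.2
  induction l generalizing A with
  | zero => exact hp A hA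
  | succ l ih =>
    simp only [Wt]
    rw [hp A hA]
    congr 1
    refine Finset.sum_congr rfl fun B hB => ?_
    rw [ih B (Finset.mem_powersetCard.1 hB).1]

lemma Zt_congr {R : Type*} [CommRing R] {n r : ℕ} (q : R) (l : ℕ) {x y : ℕ → R}
    (h : ∀ i, 1 ≤ i → i ≤ n → x i = y i) : Zt n r q l x = Zt n r q l y := by
  refine Finset.sum_congr rfl fun B hB => ?_
  exact Wt_congr q l h B (Finset.mem_powersetCard.1 hB).1

/-- extension of a vector indexed by `Fin n` to labels `1, …, n` -/
def xt {R : Type*} [CommRing R] {n : ℕ} (y : Fin n → R) (i : ℕ) : R :=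
  if h : 1 ≤ i ∧ i ≤ n then y ⟨i - 1, by omega⟩ else 0

lemma Zt_perm {R : Type*} [CommRing R] [IsDomain R] [CharZero R] {n r : ℕ} (q : R) (l : ℕ)
    (σ : Equiv.Perm (Fin n)) (y : Fin n → R) :
    Zt n r q l (xt fun j => y (σ j)) = Zt n r q l (xt y) := by
  rcases n with _ | n
  · exact Zt_congr q l (by intro i h1 h2; omega)
  have hm : σ ∈ Submonoid.closure
      (Set.range fun i : Fin n => Equiv.swap i.castSucc i.succ) := by
    rw [Equiv.Perm.mclosure_swap_castSucc_succ]; trivial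
  induction hm using Submonoid.closure_induction generalizing y with
  | mem s hs =>
    obtain ⟨i, rfl⟩ := hs
    have := inv_Zt (r := r) (n := n + 1) (i := i.1 + 1) (by omega) (by omega) q l (xt y)
    rw [← this]
    apply Zt_congr
    intro j h1 h2
    rw [xt, dif_pos ⟨h1, h2⟩, Equiv.swap_apply_def, Equiv.swap_apply_def]
    simp only [Fin.ext_iff, Fin.val_castSucc, Fin.val_succ]
    have hi := i.2
    by_cases c1 : j = i.1 + 1
    · rw [if_pos (by omega), if_pos c1, xt, dif_pos (by omega)]
      congr 1
    · by_cases c2 : j = i.1 + 1 + 1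
      · rw [if_neg (by omega), if_pos (by omega), if_neg c1, if_pos c2, xt, dif_pos (by omega)]
        congr 1
      · rw [if_neg (by omega), if_neg (by omega), if_neg c1, if_neg c2, xt, dif_pos ⟨h1, h2⟩]
  | one => rfl
  | mul a b _ _ ha hb =>
    have h1 := hb (fun j => y (a j))
    have h2 := ha y
    rw [← h2, ← h1]
    rfl

end CO

namespace CO

/-- rotation of labels by `r` -/
def rot (n r i : ℕ) : ℕ := if n - r < i then i - (n - r) else i + r

/-- inverse rotation of labels -/
def tor (n r i : ℕ) : ℕ := if i ≤ r then i + (n - r) else i - r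

lemma tor_rot {n r i : ℕ} (hr : r ≤ n) (h1 : 1 ≤ i) (h2 : i ≤ n) : tor n r (rot n r i) = i := by
  unfold tor rot; split_ifs <;> omega

lemma rot_tor {n r i : ℕ} (hr : r ≤ n) (h1 : 1 ≤ i) (h2 : i ≤ n) : rot n r (tor n r i) = i := by
  unfold tor rot; split_ifs <;> omega

lemma rot_mem {n r i : ℕ} (hr : r ≤ n) (h1 : 1 ≤ i) (h2 : i ≤ n) :
    1 ≤ rot n r i ∧ rot n r i ≤ n := by
  unfold rot; split_ifs <;> omega

lemma tor_mem {n r i : ℕ} (hr : r ≤ n) (h1 : 1 ≤ i) (h2 : i ≤ n) :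
    1 ≤ tor n r i ∧ tor n r i ≤ n := by
  unfold tor; split_ifs <;> omega

lemma rot_injOn {n r : ℕ} (hr : r ≤ n) {A : Finset ℕ} (hA : A ⊆ Finset.Icc 1 n) :
    Set.InjOn (rot n r) A := by
  intro a ha b hb h
  have h1 := Finset.mem_Icc.1 (hA ha)
  have h2 := Finset.mem_Icc.1 (hA hb)
  rw [← tor_rot hr h1.1 h1.2, h, tor_rot hr h2.1 h2.2]

lemma tor_injOn {n r : ℕ} (hr : r ≤ n) {A : Finset ℕ} (hA : A ⊆ Finset.Icc 1 n) :
    Set.InjOn (tor n r) A := by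
  intro a ha b hb h
  have h1 := Finset.mem_Icc.1 (hA ha)
  have h2 := Finset.mem_Icc.1 (hA hb)
  rw [← rot_tor hr h1.1 h1.2, h, rot_tor hr h2.1 h2.2]

lemma cnt_image_rot {n r : ℕ} (hr : r ≤ n) {A : Finset ℕ} (hA : A ⊆ Finset.Icc 1 n) (y : ℕ) :
    cnt (A.image (rot n r)) y = ∑ a ∈ A, if y ≤ rot n r a then 1 else 0 := by
  unfold cnt
  rw [Finset.card_filter, Finset.sum_image (rot_injOn hr hA)]

lemma cnt_eq_sum (A : Finset ℕ) (y : ℕ) : cnt A y = ∑ a ∈ A, if y ≤ a then 1 else 0 := by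
  unfold cnt
  rw [Finset.card_filter]

lemma rot_cnt_low {n r : ℕ} (hr : r ≤ n) {A : Finset ℕ} (hA : A ⊆ Finset.Icc 1 n) {y : ℕ}
    (h1 : 1 ≤ y) (h2 : y ≤ r) :
    cnt (A.image (rot n r)) y + cnt A (n - r + 1) = A.card + cnt A (y + (n - r)) := by
  rw [cnt_image_rot hr hA, cnt_eq_sum, cnt_eq_sum, Finset.card_eq_sum_ones,
    ← Finset.sum_add_distrib, ← Finset.sum_add_distrib]
  refine Finset.sum_congr rfl fun a ha => ?_
  have := Finset.mem_Icc.1 (hA ha)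
  unfold rot
  split_ifs <;> omega

lemma rot_cnt_high {n r : ℕ} (hr : r ≤ n) {A : Finset ℕ} (hA : A ⊆ Finset.Icc 1 n) {y : ℕ}
    (h1 : r < y) (h2 : y ≤ n) :
    cnt (A.image (rot n r)) y + cnt A (n - r + 1) = cnt A (y - r) := by
  rw [cnt_image_rot hr hA, cnt_eq_sum, cnt_eq_sum, ← Finset.sum_add_distrib]
  refine Finset.sum_congr rfl fun a ha => ?_
  have := Finset.mem_Icc.1 (hA ha)
  unfold rot
  split_ifs <;> omega

lemma cnt_one {n : ℕ} {A : Finset ℕ} (hA : A ⊆ Finset.Icc 1 n) : cnt A 1 = A.card := by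
  unfold cnt
  rw [Finset.filter_true_of_mem]
  intro a ha
  exact (Finset.mem_Icc.1 (hA ha)).1

lemma cnt_top {n : ℕ} {A : Finset ℕ} (hA : A ⊆ Finset.Icc 1 n) : cnt A (n + 1) = 0 := by
  unfold cnt
  rw [Finset.card_eq_zero, Finset.filter_eq_empty_iff]
  intro a ha
  have := (Finset.mem_Icc.1 (hA ha)).2
  omega

lemma image_rot_subset {n r : ℕ} (hr : r ≤ n) {A : Finset ℕ} (hA : A ⊆ Finset.Icc 1 n) :
    A.image (rot n r) ⊆ Finset.Icc 1 n := by
  intro a ha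
  obtain ⟨b, hb, rfl⟩ := Finset.mem_image.1 ha
  have := Finset.mem_Icc.1 (hA hb)
  exact Finset.mem_Icc.2 (rot_mem hr this.1 this.2)

lemma wm_rot {n r : ℕ} (hr0 : 1 ≤ r) (hr : r < n) {A B : Finset ℕ} (hA : A ⊆ Finset.Icc 1 n)
    (hB : B ⊆ Finset.Icc 1 n) (hAB : A.card = B.card) :
    wm n (A.image (rot n r)) (B.image (rot n r)) + cnt A (n - r + 1) =
      wm n A B + cnt B (n - r + 1) := by
  apply le_antisymm
  · have h0 := le_wm (n := n) A B (x := n - r + 1) (by omega) (by omega)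
    have : wm n (A.image (rot n r)) (B.image (rot n r)) ≤
        wm n A B + cnt B (n - r + 1) - cnt A (n - r + 1) := by
      apply wm_le
      intro y h1 h2
      by_cases hy : y ≤ r
      · have e1 := rot_cnt_low hr.le hA h1 hy
        have e2 := rot_cnt_low hr.le hB h1 hy
        have := le_wm (n := n) A B (x := y + (n - r)) (by omega) (by omega)
        omega
      · by_cases hy' : y ≤ n
        · have e1 := rot_cnt_high hr.le hA (by omega) hy'
          have e2 := rot_cnt_high hr.le hB (by omega) hy'
          have := le_wm (n := n) A B (x := y - r) (by omega) (by omega)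
          omega
        · have : y = n + 1 := by omega
          subst this
          rw [cnt_top (image_rot_subset hr.le hA)]
          omega
    omega
  · have h0 := le_wm (n := n) (A.image (rot n r)) (B.image (rot n r)) (x := r + 1)
      (by omega) (by omega)
    have e1 := rot_cnt_high hr.le hA (y := r + 1) (by omega) (by omega)
    have e2 := rot_cnt_high hr.le hB (y := r + 1) (by omega) (by omega)
    rw [Nat.add_sub_cancel_left, cnt_one hA] at e1
    rw [Nat.add_sub_cancel_left, cnt_one hB] at e2
    have : wm n A B ≤ wm n (A.image (rot n r)) (B.image (rot n r)) + cnt A (n - r + 1)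
         - cnt B (n - r + 1) := by
      apply wm_le
      intro x h1 h2
      by_cases hx : x ≤ n - r
      · have e1 := rot_cnt_high hr.le hA (y := x + r) (by omega) (by omega)
        have e2 := rot_cnt_high hr.le hB (y := x + r) (by omega) (by omega)
        rw [Nat.add_sub_cancel] at e1 e2
        have := le_wm (n := n) (A.image (rot n r)) (B.image (rot n r)) (x := x + r)
          (by omega) (by omega)
        omega
      · by_cases hx' : x ≤ n
        · have e1 := rot_cnt_low hr.le hA (y := x - (n - r)) (by omega) (by omega)
          have e2 := rot_cnt_low hr.le hB (y := x - (n - r)) (by omega) (by omega)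
          rw [Nat.sub_add_cancel (by omega)] at e1 e2
          have := le_wm (n := n) (A.image (rot n r)) (B.image (rot n r)) (x := x - (n - r))
            (by omega) (by omega)
          omega
        · have : x = n + 1 := by omega
          subst this
          rw [cnt_top hA]
          omega
    omega

/-- rescaling of the top variables -/
def xq {R : Type*} [CommRing R] (n r : ℕ) (q : R) (x : ℕ → R) (i : ℕ) : R :=
  (if n - r + 1 ≤ i then q else 1) * x i

lemma prod_xq {R : Type*} [CommRing R] (n r : ℕ) (q : R) (x : ℕ → R) (A : Finset ℕ) :
    ∏ a ∈ A, xq n r q x a = q ^ cnt A (n - r + 1) * ∏ a ∈ A, x a := by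
  unfold xq cnt
  rw [Finset.prod_mul_distrib, Finset.prod_ite, Finset.prod_const, Finset.prod_const_one, mul_one]

lemma prod_rot {R : Type*} [CommRing R] {n r : ℕ} (hr : r ≤ n) (x : ℕ → R) {A : Finset ℕ}
    (hA : A ⊆ Finset.Icc 1 n) :
    ∏ a ∈ A.image (rot n r), x (tor n r a) = ∏ a ∈ A, x a := by
  rw [Finset.prod_image (rot_injOn hr hA)]
  refine Finset.prod_congr rfl fun a ha => ?_
  have := Finset.mem_Icc.1 (hA ha)
  rw [tor_rot hr this.1 this.2]

lemma sum_rot {R : Type*} [CommRing R] {n r : ℕ} (hr : r ≤ n) (f : Finset ℕ → R) :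
    ∑ B ∈ Finset.powersetCard r (Finset.Icc 1 n), f (B.image (rot n r)) =
      ∑ B ∈ Finset.powersetCard r (Finset.Icc 1 n), f B := by
  apply Finset.sum_nbij' (fun B => B.image (rot n r)) (fun B => B.image (tor n r))
  · intro B hB
    rw [Finset.mem_powersetCard] at hB ⊢
    exact ⟨image_rot_subset hr hB.1, by rw [Finset.card_image_of_injOn (rot_injOn hr hB.1), hB.2]⟩
  · intro B hB
    rw [Finset.mem_powersetCard] at hB ⊢
    refine ⟨?_, by rw [Finset.card_image_of_injOn (tor_injOn hr hB.1), hB.2]⟩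
    intro a ha
    obtain ⟨b, hb, rfl⟩ := Finset.mem_image.1 ha
    have := Finset.mem_Icc.1 (hB.1 hb)
    exact Finset.mem_Icc.2 (tor_mem hr this.1 this.2)
  · intro B hB
    rw [Finset.mem_powersetCard] at hB
    rw [Finset.image_image]
    conv_rhs => rw [← Finset.image_id (s := B)]
    refine Finset.image_congr fun a ha => ?_
    have := Finset.mem_Icc.1 (hB.1 ha)
    exact tor_rot hr this.1 this.2
  · intro B hB
    rw [Finset.mem_powersetCard] at hB
    rw [Finset.image_image]
    conv_rhs => rw [← Finset.image_id (s := B)]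
    refine Finset.image_congr fun a ha => ?_
    have := Finset.mem_Icc.1 (hB.1 ha)
    exact rot_tor hr this.1 this.2
  · intro B _; rfl

lemma Wt_rot {R : Type*} [CommRing R] {n r : ℕ} (hr0 : 1 ≤ r) (hr : r < n) (q : R) (l : ℕ)
    (x : ℕ → R) (A : Finset ℕ) (hA : A ∈ Finset.powersetCard r (Finset.Icc 1 n)) :
    Wt n r q l (xq n r q x) A = q ^ ((l + 1) * cnt A (n - r + 1)) *
      Wt n r q l (fun i => x (tor n r i)) (A.image (rot n r)) := by
  induction l generalizing A with
  | zero =>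
    simp only [Wt]
    rw [prod_xq, prod_rot hr.le x (Finset.mem_powersetCard.1 hA).1, zero_add, one_mul]
  | succ l ih =>
    simp only [Wt]
    rw [prod_xq, prod_rot hr.le x (Finset.mem_powersetCard.1 hA).1,
      ← sum_rot hr.le (fun B => q ^ ((l + 1) * wm n (A.image (rot n r)) B) *
        Wt n r q l (fun i => x (tor n r i)) B),
      Finset.mul_sum, Finset.mul_sum, Finset.mul_sum]
    refine Finset.sum_congr rfl fun B hB => ?_
    rw [ih B hB]
    rw [Finset.mem_powersetCard] at hA hB
    have e := wm_rot hr0 hr hA.1 hB.1 (hA.2.trans hB.2.symm)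
    have : q ^ ((l + 1) * wm n A B) * q ^ ((l + 1) * cnt B (n - r + 1)) =
        q ^ ((l + 1) * cnt A (n - r + 1)) *
          q ^ ((l + 1) * wm n (A.image (rot n r)) (B.image (rot n r))) := by
      rw [← pow_add, ← pow_add, ← mul_add, ← mul_add, ← e,
        add_comm (cnt A (n - r + 1))]
    have h2 : q ^ ((l + 1 + 1) * cnt A (n - r + 1)) =
      q ^ cnt A (n - r + 1) * q ^ ((l + 1) * cnt A (n - r + 1)) := by
      rw [← pow_add]; congr 1; ring
    rw [h2]
    linear_combination (q ^ cnt A (n - r + 1) * (∏ a ∈ A, x a) *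
      Wt n r q l (fun i => x (tor n r i)) (B.image (rot n r))) * this

lemma wm_bot {n r : ℕ} {B : Finset ℕ}
    (hB : B ∈ Finset.powersetCard r (Finset.Icc 1 n)) : wm n (Finset.Icc 1 r) B = 0 := by
  rw [Finset.mem_powersetCard] at hB
  apply Nat.le_zero.1
  apply wm_le
  intro x h1 h2
  have e1 : cnt (Finset.Icc 1 r) x ≤ r + 1 - x := by
    have : ((Finset.Icc 1 r).filter fun a => x ≤ a) ⊆ Finset.Icc x r := by
      intro a ha
      simp only [Finset.mem_filter, Finset.mem_Icc] at ha ⊢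
      omega
    have := Finset.card_le_card this
    rw [Nat.card_Icc] at this
    exact this
  have e2 : B.card ≤ cnt B x + (x - 1) := by
    have h3 := Finset.card_filter_add_card_filter_not (s := B) (fun a => x ≤ a)
    have : (B.filter fun a => ¬ x ≤ a) ⊆ Finset.Icc 1 (x - 1) := by
      intro a ha
      rw [Finset.mem_filter] at ha
      have := Finset.mem_Icc.1 (hB.1 ha.1)
      rw [Finset.mem_Icc]
      omega
    have := Finset.card_le_card this
    rw [Nat.card_Icc] at this
    unfold cnt
    omega
  omega

lemma Zt_tor {R : Type*} [CommRing R] [IsDomain R] [CharZero R] {n r : ℕ}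
    (hr : r < n) (q : R) (l : ℕ) (x : ℕ → R) :
    Zt n r q l (fun i => x (tor n r i)) = Zt n r q l x := by
  have : NeZero n := ⟨by omega⟩
  have := Zt_perm (r := r) q l (Equiv.addRight (Fin.ofNat n (n - r)))
    (fun j => x (j.1 + 1))
  have e1 : Zt n r q l (xt fun j : Fin n => x (j.1 + 1)) = Zt n r q l x := by
    apply Zt_congr
    intro i h1 h2
    rw [xt, dif_pos ⟨h1, h2⟩]
    congr 1
    simp only
    omega
  rw [← e1, ← this]
  apply Zt_congr
  intro i h1 h2
  rw [xt, dif_pos ⟨h1, h2⟩]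
  congr 1
  rw [Equiv.coe_addRight, Fin.val_add, Fin.val_ofNat]
  simp only [Nat.add_mod_mod]
  unfold tor
  split_ifs
  · rw [Nat.mod_eq_of_lt (by omega)]; omega
  · rw [Nat.mod_eq_sub_mod (by omega), Nat.mod_eq_of_lt (by omega)]; omega

/-- the part of the generating function without the first row -/
noncomputable def Yt {R : Type*} [CommRing R] (n r : ℕ) (q : R) (l : ℕ) (x : ℕ → R)
    (A : Finset ℕ) : R :=
  ∑ B ∈ Finset.powersetCard r (Finset.Icc 1 n), q ^ ((l + 1) * wm n A B) * Wt n r q l x B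

lemma image_rot_top {n r : ℕ} (hr : r < n) :
    (Finset.Icc (n - r + 1) n).image (rot n r) = Finset.Icc 1 r := by
  ext a
  simp only [Finset.mem_image, Finset.mem_Icc]
  constructor
  · rintro ⟨b, hb, rfl⟩
    unfold rot
    split_ifs <;> omega
  · intro h
    refine ⟨a + (n - r), by omega, ?_⟩
    unfold rot
    split_ifs <;> omega

lemma main_id {R : Type*} [CommRing R] [IsDomain R] [CharZero R] {n r : ℕ}
    (hr0 : 1 ≤ r) (hr : r < n) (q : R) (l : ℕ) (x : ℕ → R) :
    Yt n r q l (xq n r q x) (Finset.Icc (n - r + 1) n) =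
      q ^ ((l + 1) * r) * Yt n r q l x (Finset.Icc 1 r) := by
  have e1 : Yt n r q l x (Finset.Icc 1 r) = Zt n r q l x := by
    refine Finset.sum_congr rfl fun B hB => ?_
    rw [wm_bot hB]; simp
  rw [e1, ← Zt_tor hr, Zt, ← sum_rot hr.le, Yt, Finset.mul_sum]
  refine Finset.sum_congr rfl fun B hB => ?_
  rw [Wt_rot hr0 hr q l x B hB, ← mul_assoc, ← pow_add, ← mul_add]
  congr 3
  have hB' := Finset.mem_powersetCard.1 hB
  have hs : Finset.Icc (n - r + 1) n ⊆ Finset.Icc 1 n := Finset.Icc_subset_Icc (by omega) le_rfl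
  have hc : (Finset.Icc (n - r + 1) n).card = r := by rw [Nat.card_Icc]; omega
  have e := wm_rot hr0 hr hs hB'.1 (hc.trans hB'.2.symm)
  rw [image_rot_top hr] at e
  have hB2 : B.image (rot n r) ∈ Finset.powersetCard r (Finset.Icc 1 n) := by
    rw [Finset.mem_powersetCard]
    exact ⟨image_rot_subset hr.le hB'.1,
      by rw [Finset.card_image_of_injOn (rot_injOn hr.le hB'.1), hB'.2]⟩
  rw [wm_bot hB2] at e
  rw [← e, zero_add]
  unfold cnt
  rw [Finset.filter_true_of_mem, hc]
  intro a ha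
  exact (Finset.mem_Icc.1 ha).1

end CO

namespace CO

/-- compatibility of consecutive rows -/
def GR {r : ℕ} (w v : Fin r → ℕ) : Prop :=
  Function.Injective v ∧ ∀ i, (w i ≤ v i ∧ ∀ j ≤ i, w i ≤ v j → v i ≤ v j) ∨
    (v i < w i ∧ ∀ j ≤ i, v j < w i ∧ v i ≤ v j)

/-- number of wraps between words -/
def nwr {r : ℕ} (w v : Fin r → ℕ) : ℕ := (Finset.univ.filter fun i => v i < w i).card

/-- counting function of words -/
def cntf {r : ℕ} (w : Fin r → ℕ) (x : ℕ) : ℕ := (Finset.univ.filter fun i => x ≤ w i).card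

lemma GR.castSucc {r : ℕ} {w v : Fin (r + 1) → ℕ} (h : GR w v) :
    GR (fun i : Fin r => w i.castSucc) (fun i : Fin r => v i.castSucc) := by
  refine ⟨fun a b hab => Fin.castSucc_injective r (h.1 hab), fun i => ?_⟩
  rcases h.2 i.castSucc with h1 | h1
  · exact Or.inl ⟨h1.1, fun j hj => h1.2 _ (Fin.castSucc_le_castSucc_iff.2 hj)⟩
  · exact Or.inr ⟨h1.1, fun j hj => h1.2 _ (Fin.castSucc_le_castSucc_iff.2 hj)⟩

lemma image_castSucc {r : ℕ} {v : Fin (r + 1) → ℕ} (hv : Function.Injective v) :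
    Finset.univ.image (fun i : Fin r => v i.castSucc) =
      (Finset.univ.image v).erase (v (Fin.last r)) := by
  ext a
  simp only [Finset.mem_image, Finset.mem_univ, true_and, Finset.mem_erase]
  constructor
  · rintro ⟨i, rfl⟩
    exact ⟨fun h => (Fin.castSucc_lt_last i).ne (hv h), ⟨_, rfl⟩⟩
  · rintro ⟨h, i, rfl⟩
    induction i using Fin.lastCases with
    | last => exact absurd rfl h
    | cast i => exact ⟨i, rfl⟩

lemma GR_unique {r : ℕ} {w v v' : Fin r → ℕ} (h : GR w v) (h' : GR w v')
    (him : Finset.univ.image v = Finset.univ.image v') : v = v' := by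
  induction r with
  | zero => exact Subsingleton.elim _ _
  | succ r ih =>
    have hl : v (Fin.last r) = v' (Fin.last r) := by
      have m1 : v (Fin.last r) ∈ Finset.univ.image v' := by
        rw [← him]; exact Finset.mem_image_of_mem _ (Finset.mem_univ _)
      have m2 : v' (Fin.last r) ∈ Finset.univ.image v := by
        rw [him]; exact Finset.mem_image_of_mem _ (Finset.mem_univ _)
      obtain ⟨a, _, ha⟩ := Finset.mem_image.1 m1
      obtain ⟨b, _, hb⟩ := Finset.mem_image.1 m2
      rcases h.2 (Fin.last r) with h1 | h1 <;> rcases h'.2 (Fin.last r) with h2 | h2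
      · have := h1.2 b (Fin.le_last b)
        have := h2.2 a (Fin.le_last a)
        omega
      · have := h2.2 a (Fin.le_last a)
        omega
      · have := h1.2 b (Fin.le_last b)
        omega
      · have := h1.2 b (Fin.le_last b)
        have := h2.2 a (Fin.le_last a)
        omega
    have := ih h.castSucc h'.castSucc (by
      rw [image_castSucc h.1, image_castSucc h'.1, him, hl])
    funext i
    induction i using Fin.lastCases with
    | last => exact hl
    | cast i => exact congrFun this i

lemma exists_pick (B : Finset ℕ) (hB : B.Nonempty) (a : ℕ) :
    ∃ b ∈ B, (a ≤ b ∧ ∀ c ∈ B, a ≤ c → b ≤ c) ∨ (b < a ∧ ∀ c ∈ B, c < a ∧ b ≤ c) := by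
  by_cases h : (B.filter fun c => a ≤ c).Nonempty
  · have := Finset.min'_mem _ h
    rw [Finset.mem_filter] at this
    refine ⟨_, this.1, Or.inl ⟨this.2, fun c hc hac => ?_⟩⟩
    exact Finset.min'_le _ _ (Finset.mem_filter.2 ⟨hc, hac⟩)
  · rw [Finset.not_nonempty_iff_eq_empty, Finset.filter_eq_empty_iff] at h
    have hlt : ∀ c ∈ B, c < a := fun c hc => by have := h hc; omega
    exact ⟨B.min' hB, B.min'_mem hB, Or.inr ⟨hlt _ (B.min'_mem hB),
      fun c hc => ⟨hlt c hc, B.min'_le c hc⟩⟩⟩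

lemma GR_exists {r : ℕ} (w : Fin r → ℕ) (B : Finset ℕ) (hB : B.card = r) :
    ∃ v, GR w v ∧ Finset.univ.image v = B := by
  induction r generalizing B with
  | zero =>
    refine ⟨w, ⟨fun a => a.elim0, fun a => a.elim0⟩, ?_⟩
    rw [Finset.card_eq_zero] at hB
    subst hB; simp
  | succ r ih =>
    have hne : B.Nonempty := by rw [← Finset.card_pos]; omega
    obtain ⟨b, hb, hb'⟩ := exists_pick B hne (w (Fin.last r))
    obtain ⟨v, hv, him⟩ := ih (fun i => w i.castSucc) (B.erase b)
      (by rw [Finset.card_erase_of_mem hb, hB]; rfl)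
    have hvm : ∀ i, v i ∈ B.erase b := by
      intro i; rw [← him]; exact Finset.mem_image_of_mem _ (Finset.mem_univ _)
    have hinj : Function.Injective (Fin.snoc v b : Fin (r + 1) → ℕ) := by
      intro i j
      induction i using Fin.lastCases with
      | last =>
        induction j using Fin.lastCases with
        | last => intro; rfl
        | cast j =>
          simp only [Fin.snoc_last, Fin.snoc_castSucc]
          intro h; exact absurd h.symm (Finset.mem_erase.1 (hvm j)).1
      | cast i =>
        induction j using Fin.lastCases with
        | last =>
          simp only [Fin.snoc_last, Fin.snoc_castSucc]
          intro h; exact absurd h (Finset.mem_erase.1 (hvm i)).1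
        | cast j =>
          simp only [Fin.snoc_castSucc]
          intro h; rw [hv.1 h]
    have hmem : ∀ i, (Fin.snoc v b : Fin (r + 1) → ℕ) i ∈ B := by
      intro i
      induction i using Fin.lastCases with
      | last => simpa using hb
      | cast i => simpa using (Finset.mem_erase.1 (hvm i)).2
    refine ⟨Fin.snoc v b, ⟨hinj, ?_⟩, ?_⟩
    · intro i
      induction i using Fin.lastCases with
      | last =>
        simp only [Fin.snoc_last]
        rcases hb' with h | h
        · exact Or.inl ⟨h.1, fun j _ => h.2 _ (hmem j)⟩
        · exact Or.inr ⟨h.1, fun j _ => h.2 _ (hmem j)⟩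
      | cast i =>
        rcases hv.2 i with h | h
        · refine Or.inl ⟨by simpa using h.1, fun j hj => ?_⟩
          induction j using Fin.lastCases with
          | last => exact absurd hj (not_le.2 (Fin.castSucc_lt_last i))
          | cast j =>
            simp only [Fin.snoc_castSucc]
            exact h.2 j (Fin.castSucc_le_castSucc_iff.1 hj)
        · refine Or.inr ⟨by simpa using h.1, fun j hj => ?_⟩
          induction j using Fin.lastCases with
          | last => exact absurd hj (not_le.2 (Fin.castSucc_lt_last i))
          | cast j =>
            simp only [Fin.snoc_castSucc]
            exact h.2 j (Fin.castSucc_le_castSucc_iff.1 hj)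
    · apply Finset.eq_of_subset_of_card_le
      · intro a ha
        obtain ⟨i, _, rfl⟩ := Finset.mem_image.1 ha
        exact hmem i
      · rw [Finset.card_image_of_injective _ hinj, hB]; simp

lemma cntf_succ {r : ℕ} (w : Fin (r + 1) → ℕ) (x : ℕ) :
    cntf w x = cntf (fun i : Fin r => w i.castSucc) x + if x ≤ w (Fin.last r) then 1 else 0 := by
  unfold cntf
  rw [Finset.card_filter, Finset.card_filter, Fin.sum_univ_castSucc]

lemma nwr_succ {r : ℕ} (w v : Fin (r + 1) → ℕ) :
    nwr w v = nwr (fun i : Fin r => w i.castSucc) (fun i : Fin r => v i.castSucc) +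
      if v (Fin.last r) < w (Fin.last r) then 1 else 0 := by
  unfold nwr
  rw [Finset.card_filter, Finset.card_filter, Fin.sum_univ_castSucc]

lemma cntf_le {r : ℕ} (w v : Fin r → ℕ) (x : ℕ) : cntf w x ≤ cntf v x + nwr w v := by
  unfold cntf nwr
  rw [Finset.card_filter, Finset.card_filter, Finset.card_filter, ← Finset.sum_add_distrib]
  refine Finset.sum_le_sum fun i _ => ?_
  split_ifs <;> omega

lemma cntf_anti {r : ℕ} (w : Fin r → ℕ) {x y : ℕ} (h : x ≤ y) : cntf w y ≤ cntf w x := by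
  apply Finset.card_le_card
  intro i hi
  rw [Finset.mem_filter] at hi ⊢
  exact ⟨hi.1, by omega⟩

lemma exists_cut {n r : ℕ} {w v : Fin r → ℕ} (h : GR w v) (hw : ∀ i, 1 ≤ w i ∧ w i ≤ n) :
    ∃ x, 1 ≤ x ∧ x ≤ n + 1 ∧ cntf w x = cntf v x + nwr w v := by
  induction r with
  | zero => exact ⟨1, le_rfl, by omega, by simp [cntf, nwr]⟩
  | succ r ih =>
    obtain ⟨x, hx1, hx2, hx⟩ := ih h.castSucc (fun i => hw i.castSucc)
    have hl := hw (Fin.last r)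
    have hca := cntf_le (fun i : Fin r => w i.castSucc) (fun i : Fin r => v i.castSucc)
      (w (Fin.last r))
    rcases h.2 (Fin.last r) with h1 | h1
    · by_cases hc : w (Fin.last r) < x ∧ x ≤ v (Fin.last r)
      · refine ⟨w (Fin.last r), hl.1, by omega, ?_⟩
        have h3 := cntf_anti (fun i : Fin r => w i.castSucc) hc.1.le
        have h4 : cntf (fun i : Fin r => v i.castSucc) (w (Fin.last r)) ≤
            cntf (fun i : Fin r => v i.castSucc) x := by
          apply Finset.card_le_card
          intro i hi
          rw [Finset.mem_filter] at hi ⊢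
          have := h1.2 i.castSucc (Fin.le_last _) hi.2
          beta_reduce
          exact ⟨hi.1, by omega⟩
        rw [cntf_succ, cntf_succ, nwr_succ, if_pos le_rfl, if_pos h1.1, if_neg (by omega)]
        omega
      · refine ⟨x, hx1, hx2, ?_⟩
        rw [cntf_succ, cntf_succ, nwr_succ, if_neg (show ¬ v _ < w _ by omega)]
        split_ifs <;> omega
    · have h0 : ∀ y, w (Fin.last r) ≤ y → cntf (fun i : Fin r => v i.castSucc) y = 0 := by
        intro y hy
        unfold cntf
        rw [Finset.card_eq_zero, Finset.filter_eq_empty_iff]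
        intro i _
        have := h1.2 i.castSucc (Fin.le_last _)
        beta_reduce
        omega
      by_cases hc : v (Fin.last r) < x ∧ x ≤ w (Fin.last r)
      · refine ⟨x, hx1, hx2, ?_⟩
        rw [cntf_succ, cntf_succ, nwr_succ, if_pos h1.1, if_pos hc.2, if_neg (by omega)]
        omega
      · refine ⟨w (Fin.last r), hl.1, by omega, ?_⟩
        rw [cntf_succ, cntf_succ, nwr_succ, if_pos h1.1, if_pos le_rfl, if_neg (by omega)]
        have := h0 _ le_rfl
        by_cases hx3 : w (Fin.last r) < x
        · have h3 := cntf_anti (fun i : Fin r => w i.castSucc) hx3.le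
          omega
        · have hvx : cntf (fun i : Fin r => v i.castSucc) x = r := by
            unfold cntf
            rw [Finset.filter_true_of_mem]
            · simp
            · intro i _
              have := h1.2 i.castSucc (Fin.le_last _)
              beta_reduce
              omega
          have : cntf (fun i : Fin r => w i.castSucc) x ≤ r := by
            unfold cntf
            refine (Finset.card_le_univ _).trans ?_
            simp
          omega

lemma cnt_image {r : ℕ} {w : Fin r → ℕ} (hw : Function.Injective w) (x : ℕ) :
    cnt (Finset.univ.image w) x = cntf w x := by
  unfold cnt cntf
  rw [Finset.filter_image, Finset.card_image_of_injective _ hw]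

lemma nwr_eq_wm {n r : ℕ} {w v : Fin r → ℕ} (h : GR w v) (hw : ∀ i, 1 ≤ w i ∧ w i ≤ n)
    (hwi : Function.Injective w) :
    nwr w v = wm n (Finset.univ.image w) (Finset.univ.image v) := by
  apply le_antisymm
  · obtain ⟨x, h1, h2, h3⟩ := exists_cut h hw
    have := le_wm (n := n) (Finset.univ.image w) (Finset.univ.image v) h1 h2
    rw [cnt_image hwi, cnt_image h.1] at this
    omega
  · apply wm_le
    intro x _ _
    rw [cnt_image hwi, cnt_image h.1]
    exact cntf_le w v x

/-- words with letters `1, …, n` -/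
def Om (n r : ℕ) : Finset (Fin r → ℕ) := Fintype.piFinset fun _ => Finset.Icc 1 n

lemma mem_Om {n r : ℕ} (w : Fin r → ℕ) : w ∈ Om n r ↔ ∀ i, 1 ≤ w i ∧ w i ≤ n := by
  simp [Om]

open Classical in
/-- sum over compatible next rows as a sum over sets -/
lemma sum_GR {R : Type*} [CommRing R] {n r : ℕ} {w : Fin r → ℕ} (hw : w ∈ Om n r)
    (hwi : Function.Injective w) (f : ℕ → Finset ℕ → R) :
    ∑ v ∈ (Om n r).filter (fun v => GR w v), f (nwr w v) (Finset.univ.image v) =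
      ∑ B ∈ Finset.powersetCard r (Finset.Icc 1 n), f (wm n (Finset.univ.image w) B) B := by
  rw [mem_Om] at hw
  refine Finset.sum_bij (fun v _ => Finset.univ.image v) ?_ ?_ ?_ ?_
  · intro v hv
    rw [Finset.mem_filter, mem_Om] at hv
    rw [Finset.mem_powersetCard]
    refine ⟨?_, ?_⟩
    · intro a ha
      obtain ⟨i, _, rfl⟩ := Finset.mem_image.1 ha
      exact Finset.mem_Icc.2 (hv.1 i)
    · rw [Finset.card_image_of_injective _ hv.2.1]; simp
  · intro v hv v' hv' h
    exact GR_unique (Finset.mem_filter.1 hv).2 (Finset.mem_filter.1 hv').2 h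
  · intro B hB
    rw [Finset.mem_powersetCard] at hB
    obtain ⟨v, h1, h2⟩ := GR_exists w B hB.2
    refine ⟨v, ?_, h2⟩
    rw [Finset.mem_filter, mem_Om]
    refine ⟨fun i => ?_, h1⟩
    apply Finset.mem_Icc.1
    apply hB.1
    rw [← h2]
    exact Finset.mem_image_of_mem _ (Finset.mem_univ _)
  · intro v hv
    rw [nwr_eq_wm (Finset.mem_filter.1 hv).2 hw hwi]

end CO

namespace CO

/-- chain condition on sequences of rows -/
def Chain {r l : ℕ} (w : Fin r → ℕ) (g : Fin (l + 1) → Fin r → ℕ) : Prop :=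
  g 0 = w ∧ ∀ j : Fin l, GR (g j.castSucc) (g j.succ)

/-- total weighted number of wraps -/
def wexp {r l : ℕ} (g : Fin (l + 1) → Fin r → ℕ) : ℕ :=
  ∑ j : Fin l, (l - j.1) * nwr (g j.castSucc) (g j.succ)

open Classical in
lemma sum_chain {R : Type*} [CommRing R] {n r : ℕ} (q : R) (x : ℕ → R) (l : ℕ)
    {w : Fin r → ℕ} (hw : w ∈ Om n r) (hwi : Function.Injective w) :
    ∑ g ∈ (Fintype.piFinset fun _ : Fin (l + 1) => Om n r).filter (fun g => Chain w g),
      (∏ j, ∏ c, x (g j c)) * q ^ wexp g = Wt n r q l x (Finset.univ.image w) := by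
  have hprod : ∏ a ∈ Finset.univ.image w, x a = ∏ c, x (w c) := by
    rw [Finset.prod_image]
    intro a _ b _ h
    exact hwi h
  induction l generalizing w with
  | zero =>
    have : (Fintype.piFinset fun _ : Fin (0 + 1) => Om n r).filter (fun g => Chain w g) =
        {fun _ => w} := by
      ext g
      rw [Finset.mem_filter, Finset.mem_singleton, Fintype.mem_piFinset]
      constructor
      · rintro ⟨_, h, _⟩
        funext j
        rw [← h]
        congr 1
        exact @Subsingleton.elim (Fin 1) _ _ _
      · rintro rfl
        exact ⟨fun _ => hw, rfl, fun j => j.elim0⟩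
    rw [this, Finset.sum_singleton]
    simp [Wt, wexp, hprod]
  | succ l ih =>
    simp only [Wt]
    rw [hprod, ← sum_GR hw hwi (fun N B => q ^ ((l + 1) * N) * Wt n r q l x B)]
    have h1 : ∀ v ∈ (Om n r).filter (fun v => GR w v),
        q ^ ((l + 1) * nwr w v) * Wt n r q l x (Finset.univ.image v) =
        ∑ g ∈ (Fintype.piFinset fun _ : Fin (l + 1) => Om n r).filter (fun g => Chain v g),
          q ^ ((l + 1) * nwr w v) * ((∏ j, ∏ c, x (g j c)) * q ^ wexp g) := by
      intro v hv
      rw [Finset.mem_filter] at hv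
      have hvi : Function.Injective v := hv.2.1
      rw [← ih hv.1 hvi (by
        rw [Finset.prod_image]
        intro a _ b _ h
        exact hvi h), Finset.mul_sum]
    rw [Finset.sum_congr rfl h1, Finset.sum_sigma', Finset.mul_sum]
    refine Finset.sum_bij' (fun g _ => ⟨g 1, fun j => g j.succ⟩)
      (fun p _ => Fin.cons w p.2) ?_ ?_ ?_ ?_ ?_
    · intro g hg
      rw [Finset.mem_filter, Fintype.mem_piFinset] at hg
      obtain ⟨h2, h3, h4⟩ := hg
      simp only [Finset.mem_sigma, Finset.mem_filter, Fintype.mem_piFinset]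
      refine ⟨⟨h2 1, ?_⟩, fun j => h2 _, rfl, fun j => ?_⟩
      · have := h4 0
        rw [Fin.castSucc_zero, h3] at this
        exact this
      · have := h4 j.succ
        rw [← Fin.succ_castSucc] at this
        exact this
    · rintro ⟨v, g⟩ hp
      simp only [Finset.mem_sigma, Finset.mem_filter, Fintype.mem_piFinset] at hp
      obtain ⟨⟨h2, h3⟩, h4, h5, h6⟩ := hp
      rw [Finset.mem_filter, Fintype.mem_piFinset]
      refine ⟨?_, rfl, ?_⟩
      · intro j
        induction j using Fin.cases with
        | zero => exact hw
        | succ j => exact h4 j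
      · intro j
        induction j using Fin.cases with
        | zero =>
          simp only [Fin.castSucc_zero, Fin.cons_zero, Fin.cons_succ]
          rw [h5]; exact h3
        | succ j =>
          rw [← Fin.succ_castSucc]
          simp only [Fin.cons_succ]
          exact h6 j
    · intro g hg
      rw [Finset.mem_filter] at hg
      funext j
      induction j using Fin.cases with
      | zero => simp only [Fin.cons_zero]; exact hg.2.1.symm
      | succ j => simp only [Fin.cons_succ]
    · rintro ⟨v, g⟩ hp
      simp only [Finset.mem_sigma, Finset.mem_filter] at hp
      obtain ⟨_, _, h5, _⟩ := hp
      have : (Fin.cons w g : Fin (l + 1 + 1) → Fin r → ℕ) 1 = v := by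
        rw [← h5]; rfl
      simp only [Fin.cons_succ, this]
    · intro g hg
      rw [Finset.mem_filter] at hg
      obtain ⟨_, h3, _⟩ := hg
      have e : wexp g = (l + 1) * nwr w (g 1) + wexp (fun j => g j.succ) := by
        unfold wexp
        rw [Fin.sum_univ_succ]
        congr 1
        · rw [Fin.castSucc_zero, h3]; simp
        · refine Finset.sum_congr rfl fun j _ => ?_
          rw [← Fin.succ_castSucc]
          congr 1
          simp
      rw [e, Fin.prod_univ_succ, h3, pow_add]
      ring

lemma greedy_iff (S : Set ℕ) (a b : ℕ) (hb : b ∈ S) :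
    (({x ∈ S | a ≤ x}.Nonempty → b = sInf {x ∈ S | a ≤ x}) ∧
      (¬ {x ∈ S | a ≤ x}.Nonempty → b = sInf S)) ↔
    ((a ≤ b ∧ ∀ c ∈ S, a ≤ c → b ≤ c) ∨ (b < a ∧ ∀ c ∈ S, c < a ∧ b ≤ c)) := by
  constructor
  · rintro ⟨h1, h2⟩
    by_cases h : {x ∈ S | a ≤ x}.Nonempty
    · left
      have h3 := h1 h
      have h4 := Nat.sInf_mem h
      rw [← h3] at h4
      refine ⟨h4.2, fun c hc hac => ?_⟩
      rw [h3]
      exact Nat.sInf_le ⟨hc, hac⟩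
    · right
      have h3 := h2 h
      have hlt : ∀ c ∈ S, c < a := by
        intro c hc
        by_contra hca
        exact h ⟨c, hc, by omega⟩
      refine ⟨hlt b hb, fun c hc => ⟨hlt c hc, ?_⟩⟩
      rw [h3]
      exact Nat.sInf_le hc
  · rintro (⟨h1, h2⟩ | ⟨h1, h2⟩)
    · refine ⟨fun h => ?_, fun h => absurd ⟨b, hb, h1⟩ h⟩
      have := Nat.sInf_mem h
      apply le_antisymm
      · exact h2 _ this.1 this.2
      · exact Nat.sInf_le ⟨hb, h1⟩
    · refine ⟨?_, fun _ => ?_⟩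
      · rintro ⟨c, hc, hac⟩
        have := (h2 c hc).1
        omega
      · apply le_antisymm
        · exact (h2 _ (Nat.sInf_mem ⟨b, hb⟩)).2
        · exact Nat.sInf_le hb

/-- the rectangular composition -/
def rect (n r m : ℕ) : ℕ → ℕ := fun i => if n - r + 1 ≤ i then m + 1 else 0

lemma rect_of {n r m i : ℕ} (h : n - r + 1 ≤ i) : rect n r m i = m + 1 := if_pos h

lemma mem_dgF_rect {n r m : ℕ} (u : ℕ × ℕ) :
    u ∈ dgF n (rect n r m) ↔ n - r + 1 ≤ u.1 ∧ u.1 ≤ n ∧ 1 ≤ u.2 ∧ u.2 ≤ m + 1 := by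
  obtain ⟨i, j⟩ := u
  simp only [dgF, Finset.mem_biUnion, Finset.mem_image, Finset.mem_Icc, rect, Prod.mk.injEq]
  constructor
  · rintro ⟨a, ha, b, hb, rfl, rfl⟩
    split_ifs at hb <;> omega
  · rintro ⟨h1, h2, h3, h4⟩
    refine ⟨i, by omega, j, ?_, rfl, rfl⟩
    rw [if_pos h1]; omega

/-- box in row `j` and column `c` -/
def bx (n r : ℕ) {m : ℕ} (j : Fin (m + 1)) (c : Fin r) : ℕ × ℕ := (n - r + 1 + c.1, j.1 + 1)

lemma bx_mem {n r m : ℕ} (hr : r < n) (j : Fin (m + 1)) (c : Fin r) :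
    bx n r j c ∈ dgF n (rect n r m) := by
  rw [mem_dgF_rect]
  have := j.2
  have := c.2
  simp only [bx]
  omega

lemma exists_bx {n r m : ℕ} (hr : r < n) {u : ℕ × ℕ} (hu : u ∈ dgF n (rect n r m)) :
    ∃ (j : Fin (m + 1)) (c : Fin r), u = bx n r j c := by
  rw [mem_dgF_rect] at hu
  refine ⟨⟨u.2 - 1, by omega⟩, ⟨u.1 - (n - r + 1), by omega⟩, ?_⟩
  obtain ⟨i, j⟩ := u
  simp only [bx, Prod.mk.injEq] at *
  omega

lemma bx_inj {n r m : ℕ} {j j' : Fin (m + 1)} {c c' : Fin r} (h : bx n r j c = bx n r j' c') :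
    j = j' ∧ c = c' := by
  simp only [bx, Prod.mk.injEq] at h
  exact ⟨Fin.ext (by omega), Fin.ext (by omega)⟩

lemma sum_dgF {n r m : ℕ} (hr : r < n) (F : ℕ × ℕ → ℕ) :
    ∑ u ∈ dgF n (rect n r m), F u = ∑ j : Fin (m + 1), ∑ c : Fin r, F (bx n r j c) := by
  rw [← Fintype.sum_prod_type' (fun j c => F (bx n r j c))]
  symm
  refine Finset.sum_bij (fun p _ => bx n r p.1 p.2) ?_ ?_ ?_ ?_
  · intro p _; exact bx_mem hr _ _
  · intro p _ p' _ h
    exact Prod.ext (bx_inj h).1 (bx_inj h).2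
  · intro u hu
    obtain ⟨j, c, rfl⟩ := exists_bx hr hu
    exact ⟨(j, c), Finset.mem_univ _, rfl⟩
  · intro p _; rfl

/-- rows of a filling -/
def rows (n r m : ℕ) (τ : ℕ × ℕ → ℕ) : Fin (m + 1) → Fin r → ℕ := fun j c => τ (bx n r j c)

lemma dbox_bx {n r m : ℕ} (j : Fin m) (c : Fin r) :
    dbox (bx n r j.succ c) = bx n r j.castSucc c := rfl

lemma ascStat_rect {n r m : ℕ} (hr : r < n) (τ : ℕ × ℕ → ℕ) :
    ascStat n (rect n r m) τ = wexp (rows n r m τ) := by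
  unfold ascStat
  rw [Finset.sum_filter, sum_dgF hr, Fin.sum_univ_succ]
  have h0 : ∑ c : Fin r, (if 2 ≤ (bx n r (0 : Fin (m + 1)) c).2 ∧
      τ (bx n r (0 : Fin (m + 1)) c) < τ (dbox (bx n r (0 : Fin (m + 1)) c)) then
      rect n r m (bx n r (0 : Fin (m + 1)) c).1 - (bx n r (0 : Fin (m + 1)) c).2 + 1 else 0) = 0 := by
    refine Finset.sum_eq_zero fun c _ => ?_
    rw [if_neg]
    simp [bx]
  rw [h0, zero_add]
  unfold wexp
  refine Finset.sum_congr rfl fun j _ => ?_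
  unfold nwr
  rw [Finset.card_filter, Finset.mul_sum]
  refine Finset.sum_congr rfl fun c _ => ?_
  rw [dbox_bx]
  change _ = (m - j.1) * (if τ (bx n r j.succ c) < τ (bx n r j.castSucc c) then 1 else 0)
  have hj := j.2
  have h2 : 2 ≤ (bx n r j.succ c).2 := by simp [bx]
  by_cases h : τ (bx n r j.succ c) < τ (bx n r j.castSucc c)
  · rw [if_pos ⟨h2, h⟩, if_pos h, mul_one]
    rw [rect_of (by simp [bx])]
    simp only [bx, Fin.val_succ]
    omega
  · rw [if_neg (fun h' => h h'.2), if_neg h, mul_zero]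

lemma arm_image {n r m : ℕ} (hr : r < n) (τ : ℕ × ℕ → ℕ) (j : Fin (m + 1)) (c : Fin r) :
    τ '' ↑(armF n (rect n r m) (bx n r j c)) ∪ {τ (bx n r j c)} =
      {y | ∃ c' ≤ c, y = rows n r m τ j c'} := by
  ext y
  simp only [Set.mem_union, Set.mem_image, Finset.mem_coe, Set.mem_singleton_iff, Set.mem_ofPred_eq]
  constructor
  · rintro (⟨v, hv, rfl⟩ | rfl)
    · simp only [armF, Finset.mem_union, Finset.mem_filter] at hv
      rcases hv with ⟨hv, h1, h2, _⟩ | ⟨hv, h1, h2, h3⟩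
      · obtain ⟨j', c', rfl⟩ := exists_bx hr hv
        simp only [bx] at h1 h2
        have : j' = j := Fin.ext (by omega)
        subst this
        exact ⟨c', Fin.le_def.2 (by omega), rfl⟩
      · exfalso
        have hb : n - r + 1 ≤ (bx n r j c).1 := by simp [bx]
        rw [rect_of hb, rect_of (hb.trans h1.le)] at h3
        omega
    · exact ⟨c, le_rfl, rfl⟩
  · rintro ⟨c', hc, rfl⟩
    rcases hc.lt_or_eq with h | rfl
    · left
      refine ⟨bx n r j c', ?_, rfl⟩
      simp only [armF, Finset.mem_union, Finset.mem_filter]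
      left
      refine ⟨bx_mem hr j c', ?_, rfl, ?_⟩
      · have := Fin.lt_def.1 h
        simp only [bx]; omega
      · rw [rect_of (by simp [bx]), rect_of (by simp [bx])]
    · right; rfl

lemma greedy_rect {n r m : ℕ} (hr : r < n) (τ : ℕ × ℕ → ℕ) :
    GreedyRule n (rect n r m) τ ↔ ∀ (j : Fin m) (c : Fin r),
      (rows n r m τ j.castSucc c ≤ rows n r m τ j.succ c ∧
        ∀ c' ≤ c, rows n r m τ j.castSucc c ≤ rows n r m τ j.succ c' →
          rows n r m τ j.succ c ≤ rows n r m τ j.succ c') ∨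
      (rows n r m τ j.succ c < rows n r m τ j.castSucc c ∧
        ∀ c' ≤ c, rows n r m τ j.succ c' < rows n r m τ j.castSucc c ∧
          rows n r m τ j.succ c ≤ rows n r m τ j.succ c') := by
  have key : ∀ (j : Fin m) (c : Fin r), ((({x ∈ τ '' ↑(armF n (rect n r m) (bx n r j.succ c)) ∪
      {τ (bx n r j.succ c)} | τ (dbox (bx n r j.succ c)) ≤ x}.Nonempty →
        τ (bx n r j.succ c) = sInf {x ∈ τ '' ↑(armF n (rect n r m) (bx n r j.succ c)) ∪
          {τ (bx n r j.succ c)} | τ (dbox (bx n r j.succ c)) ≤ x}) ∧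
      (¬ {x ∈ τ '' ↑(armF n (rect n r m) (bx n r j.succ c)) ∪
        {τ (bx n r j.succ c)} | τ (dbox (bx n r j.succ c)) ≤ x}.Nonempty →
        τ (bx n r j.succ c) = sInf (τ '' ↑(armF n (rect n r m) (bx n r j.succ c)) ∪
          {τ (bx n r j.succ c)})))) ↔ _ := fun j c =>
    greedy_iff (τ '' ↑(armF n (rect n r m) (bx n r j.succ c)) ∪ {τ (bx n r j.succ c)})
      (τ (dbox (bx n r j.succ c))) (τ (bx n r j.succ c)) (Or.inr rfl)
  constructor
  · intro h j c
    have h1 := (key j c).1 (h (bx n r j.succ c) (bx_mem hr _ _) (by simp [bx]))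
    rw [arm_image hr, dbox_bx] at h1
    rcases h1 with h1 | h1
    · exact Or.inl ⟨h1.1, fun c' hc' => h1.2 _ ⟨c', hc', rfl⟩⟩
    · exact Or.inr ⟨h1.1, fun c' hc' => h1.2 _ ⟨c', hc', rfl⟩⟩
  · intro h u hu h2
    obtain ⟨j, c, rfl⟩ := exists_bx hr hu
    induction j using Fin.cases with
    | zero => simp [bx] at h2
    | succ j =>
      apply (key j c).2
      rw [arm_image hr, dbox_bx]
      rcases h j c with h1 | h1
      · refine Or.inl ⟨h1.1, ?_⟩
        rintro _ ⟨c', hc', rfl⟩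
        exact h1.2 c' hc'
      · refine Or.inr ⟨h1.1, ?_⟩
        rintro _ ⟨c', hc', rfl⟩
        exact h1.2 c' hc'

lemma CCond_rect {n r m : ℕ} (hr : r < n) (a k : ℕ → ℕ) (τ : ℕ × ℕ → ℕ)
    (ha : Function.Injective fun c : Fin r => a (n - r + 1 + c.1)) :
    CCond n (rect n r m) a k τ ↔ (∀ j, rows n r m τ j ∈ Om n r) ∧
      Chain (fun c : Fin r => a (n - r + 1 + c.1)) (rows n r m τ) ∧
      ∀ i, 1 ≤ i → i ≤ n →
        (∑ j, ∑ c, if rows n r m τ j c = i then 1 else 0) = k i := by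
  have hcard : ∀ i, ((dgF n (rect n r m)).filter fun u => τ u = i).card =
      ∑ j, ∑ c, if rows n r m τ j c = i then 1 else 0 := by
    intro i
    rw [Finset.card_filter, sum_dgF hr]; rfl
  unfold CCond
  rw [greedy_rect hr]
  simp only [hcard]
  constructor
  · rintro ⟨h1, h2, h3, h4, h5⟩
    refine ⟨fun j => (mem_Om _).2 fun c => h1 _ (bx_mem hr j c), ⟨?_, fun j => ⟨?_, h4 j⟩⟩, h5⟩
    · funext c
      exact h2 _ (bx_mem hr (0 : Fin (m + 1)) c)
    · intro c c' hcc
      by_contra hne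
      refine h3 _ (bx_mem hr j.succ c) _ (bx_mem hr j.succ c') ⟨?_, Or.inl rfl⟩ hcc
      intro h; exact hne (bx_inj h).2
  · rintro ⟨h1, ⟨h2, h3⟩, h5⟩
    have hinj : ∀ j, Function.Injective (rows n r m τ j) := by
      intro j
      induction j using Fin.cases with
      | zero => rw [h2]; exact ha
      | succ j => exact (h3 j).1
    have hatt : ∀ (j : Fin m) (c c' : Fin r), c < c' →
        rows n r m τ j.succ c ≠ rows n r m τ j.castSucc c' := by
      intro j c c' hcc heq
      rcases (h3 j).2 c' with h | h
      · have h6 := h.2 c hcc.le (by rw [heq])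
        have h7 : rows n r m τ j.succ c = rows n r m τ j.succ c' := by
          have := h.1
          omega
        exact hcc.ne ((h3 j).1 h7)
      · have := (h.2 c hcc.le).1
        omega
    refine ⟨?_, ?_, ?_, fun j => (h3 j).2, h5⟩
    · intro u hu
      obtain ⟨j, c, rfl⟩ := exists_bx hr hu
      exact (mem_Om _).1 (h1 j) c
    · intro i hi
      have hi' := (mem_dgF_rect _).1 hi
      have := congrFun h2 ⟨i - (n - r + 1), by omega⟩
      simp only [rows, bx, Fin.val_zero] at this
      rw [Nat.add_sub_cancel' hi'.1] at this
      exact this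
    · intro u hu v hv huv
      obtain ⟨j, c, rfl⟩ := exists_bx hr hu
      obtain ⟨j', c', rfl⟩ := exists_bx hr hv
      obtain ⟨hne, h | h | h⟩ := huv
      · simp only [bx] at h
        have : j = j' := Fin.ext (by omega)
        subst this
        intro heq
        exact hne (by rw [hinj j heq])
      · simp only [bx] at h
        have hj := j.2
        obtain ⟨i, rfl⟩ : ∃ i : Fin m, j = i.succ :=
          ⟨⟨j.1 - 1, by omega⟩, Fin.ext (by simp only [Fin.val_succ]; omega)⟩
        have : j' = i.castSucc := by
          apply Fin.ext
          have := h.1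
          simp only [Fin.val_succ, Fin.val_castSucc] at this ⊢
          omega
        subst this
        exact hatt i c c' (Fin.lt_def.2 (by omega))
      · simp only [bx] at h
        have hj := j'.2
        obtain ⟨i, rfl⟩ : ∃ i : Fin m, j' = i.succ :=
          ⟨⟨j'.1 - 1, by omega⟩, Fin.ext (by simp only [Fin.val_succ]; omega)⟩
        have : j = i.castSucc := by
          apply Fin.ext
          have := h.1
          simp only [Fin.val_succ, Fin.val_castSucc] at this ⊢
          omega
        subst this
        exact (hatt i c' c (Fin.lt_def.2 (by omega))).symm

/-- content condition on a sequence of rows -/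
def CM {r l : ℕ} (n : ℕ) (k : ℕ → ℕ) (g : Fin (l + 1) → Fin r → ℕ) : Prop :=
  ∀ i, 1 ≤ i → i ≤ n → (∑ j, ∑ c, if g j c = i then 1 else 0) = k i

open Classical in
lemma cCoef_rect {n r m : ℕ} (hr : r < n) (a k : ℕ → ℕ)
    (ha : Function.Injective fun c : Fin r => a (n - r + 1 + c.1)) :
    cCoef n (rect n r m) a k =
      ∑ g ∈ (Fintype.piFinset fun _ : Fin (m + 1) => Om n r).filter
        (fun g => Chain (fun c : Fin r => a (n - r + 1 + c.1)) g),
        if CM n k g then Polynomial.X ^ wexp g else 0 := by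
  unfold cCoef
  refine Eq.trans ?_ (Finset.sum_filter _ _)
  rw [Finset.filter_filter (fun g => Chain (fun c : Fin r => a (n - r + 1 + c.1)) g)]
  have hrows : ∀ g : Fin (m + 1) → Fin r → ℕ, rows n r m (ext n (rect n r m) fun u =>
      g ⟨u.1.2 - 1, by have := (mem_dgF_rect _).1 u.2; omega⟩
        ⟨u.1.1 - (n - r + 1), by have := (mem_dgF_rect _).1 u.2; omega⟩) = g := by
    intro g
    funext j c
    simp only [rows, ext]
    rw [dif_pos (bx_mem hr j c)]
    simp [bx]
  refine Finset.sum_bij' (fun f _ => rows n r m (ext n (rect n r m) f))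
    (fun g _ u => g ⟨u.1.2 - 1, by have := (mem_dgF_rect _).1 u.2; omega⟩
      ⟨u.1.1 - (n - r + 1), by have := (mem_dgF_rect _).1 u.2; omega⟩) ?_ ?_ ?_ ?_ ?_
  · intro f hf
    rw [Finset.mem_filter, CCond_rect hr a k _ ha] at hf
    rw [Finset.mem_filter, Fintype.mem_piFinset]
    exact hf.2
  · intro g hg
    rw [Finset.mem_filter, Fintype.mem_piFinset] at hg
    rw [Finset.mem_filter, CCond_rect hr a k _ ha, hrows, Fintype.mem_piFinset]
    refine ⟨?_, hg.1, hg.2⟩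
    intro u
    exact Finset.mem_Icc.2 ((mem_Om _).1 (hg.1 _) _)
  · intro f _
    funext u
    obtain ⟨u, hu⟩ := u
    obtain ⟨j, c, rfl⟩ := exists_bx hr hu
    simp only [rows, ext]
    have : bx n r (⟨(bx n r j c).2 - 1, by have := j.2; simp only [bx]; omega⟩ : Fin (m + 1))
      (⟨(bx n r j c).1 - (n - r + 1), by simp [bx]⟩ : Fin r) = bx n r j c := by simp [bx]
    simp only [this, dif_pos hu]
  · intro g _
    exact hrows g
  · intro f _
    rw [ascStat_rect hr]

end CO

namespace CO

open MvPolynomial in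
lemma map_Wt {R S : Type*} [CommRing R] [CommRing S] (f : R →+* S) (n r : ℕ) (q : R) (l : ℕ)
    (x : ℕ → R) (A : Finset ℕ) :
    f (Wt n r q l x A) = Wt n r (f q) l (fun i => f (x i)) A := by
  induction l generalizing A with
  | zero => simp only [Wt, map_prod]
  | succ l ih => simp only [Wt, map_prod, map_mul, map_sum, map_pow, ih]

lemma map_Yt {R S : Type*} [CommRing R] [CommRing S] (f : R →+* S) (n r : ℕ) (q : R) (l : ℕ)
    (x : ℕ → R) (A : Finset ℕ) :
    f (Yt n r q l x A) = Yt n r (f q) l (fun i => f (x i)) A := by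
  simp only [Yt, map_mul, map_sum, map_pow, map_Wt]

/-- exponent vector -/
noncomputable def kap (n : ℕ) (k : ℕ → ℕ) : ℕ →₀ ℕ := ∑ i ∈ Finset.Icc 1 n, Finsupp.single i (k i)

lemma kap_apply (n : ℕ) (k : ℕ → ℕ) (i : ℕ) :
    kap n k i = if 1 ≤ i ∧ i ≤ n then k i else 0 := by
  simp [kap, Finsupp.finsetSum_apply, Finsupp.single_apply]

/-- exponent vector of a sequence of rows -/
noncomputable def gex {r l : ℕ} (g : Fin (l + 1) → Fin r → ℕ) : ℕ →₀ ℕ :=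
  ∑ j, ∑ c, Finsupp.single (g j c) 1

lemma gex_apply {r l : ℕ} (g : Fin (l + 1) → Fin r → ℕ) (i : ℕ) :
    gex g i = ∑ j, ∑ c, if g j c = i then 1 else 0 := by
  simp only [gex, Finsupp.finsetSum_apply, Finsupp.single_apply]

lemma gex_eq {n r l : ℕ} (k : ℕ → ℕ) {g : Fin (l + 1) → Fin r → ℕ} (hg : ∀ j, g j ∈ Om n r) :
    gex g = kap n k ↔ CM n k g := by
  constructor
  · intro h i h1 h2
    rw [← gex_apply, h, kap_apply, if_pos ⟨h1, h2⟩]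
  · intro h
    ext i
    rw [gex_apply, kap_apply]
    split_ifs with h1
    · exact h i h1.1 h1.2
    · refine Finset.sum_eq_zero fun j _ => Finset.sum_eq_zero fun c _ => ?_
      rw [if_neg]
      rintro rfl
      exact h1 ((mem_Om _).1 (hg j) c)

/-- the ring of generating functions -/
abbrev GF := MvPolynomial ℕ (Polynomial ℤ)

/-- the parameter `q` -/
noncomputable def qq : GF := MvPolynomial.C Polynomial.X

open Classical in
lemma coeff_g {n r l : ℕ} (k : ℕ → ℕ) {g : Fin (l + 1) → Fin r → ℕ} (hg : ∀ j, g j ∈ Om n r)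
    (w : ℕ) :
    MvPolynomial.coeff (kap n k) ((∏ j, ∏ c, (MvPolynomial.X (g j c) : GF)) * qq ^ w) =
      if CM n k g then Polynomial.X ^ w else 0 := by
  have h1 : (∏ j, ∏ c, (MvPolynomial.X (g j c) : GF)) = MvPolynomial.monomial (gex g) 1 := by
    simp only [gex, MvPolynomial.monomial_sum_one, MvPolynomial.X]
  rw [h1, qq, ← map_pow, mul_comm, MvPolynomial.coeff_C_mul, MvPolynomial.coeff_monomial]
  by_cases h : CM n k g
  · rw [if_pos h, if_pos ((gex_eq k hg).2 h), mul_one]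
  · rw [if_neg h, if_neg (fun h' => h ((gex_eq k hg).1 h')), mul_zero]

lemma cCoef_coeff {n r m : ℕ} (hr : r < n) (a k : ℕ → ℕ)
    (ha : Function.Injective fun c : Fin r => a (n - r + 1 + c.1))
    (ha2 : (fun c : Fin r => a (n - r + 1 + c.1)) ∈ Om n r) :
    cCoef n (rect n r m) a k = MvPolynomial.coeff (kap n k)
      (Wt n r qq m MvPolynomial.X (Finset.univ.image fun c : Fin r => a (n - r + 1 + c.1))) := by
  classical
  rw [cCoef_rect hr a k ha, ← sum_chain qq MvPolynomial.X m ha2 ha, MvPolynomial.coeff_sum]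
  refine Finset.sum_congr (by congr) fun g hg => ?_
  rw [Finset.mem_filter, Fintype.mem_piFinset] at hg
  rw [coeff_g k hg.1]

lemma coeff_Wt_succ {n r l : ℕ} (k k' : ℕ → ℕ) (A : Finset ℕ)
    (h : kap n k' = (∑ a ∈ A, Finsupp.single a 1) + kap n k) :
    MvPolynomial.coeff (kap n k') (Wt n r qq (l + 1) MvPolynomial.X A) =
      MvPolynomial.coeff (kap n k) (Yt n r qq l MvPolynomial.X A) := by
  have h1 : (∏ a ∈ A, (MvPolynomial.X a : GF)) =
      MvPolynomial.monomial (∑ a ∈ A, Finsupp.single a 1) 1 := by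
    simp only [MvPolynomial.monomial_sum_one, MvPolynomial.X]
  change MvPolynomial.coeff _ ((∏ a ∈ A, (MvPolynomial.X a : GF)) *
    Yt n r qq l MvPolynomial.X A) = _
  rw [h1, h, MvPolynomial.coeff_monomial_mul, one_mul]

lemma coeff_scale (n r : ℕ) (κ : ℕ →₀ ℕ) (P : GF) :
    MvPolynomial.coeff κ (MvPolynomial.aeval (R := Polynomial ℤ)
      (xq n r qq MvPolynomial.X) P) =
      Polynomial.X ^ (κ.sum fun i e => if n - r + 1 ≤ i then e else 0) *
        MvPolynomial.coeff κ P := by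
  induction P using MvPolynomial.induction_on' with
  | monomial u a =>
    have h : u.prod (fun i e => xq n r qq (MvPolynomial.X : ℕ → GF) i ^ e) =
        MvPolynomial.monomial u
          (Polynomial.X ^ (u.sum fun i e => if n - r + 1 ≤ i then e else 0)) := by
      rw [MvPolynomial.monomial_eq, map_pow]
      simp only [Finsupp.prod, Finsupp.sum, xq, mul_pow, Finset.prod_mul_distrib]
      congr 1
      rw [← Finset.prod_pow_eq_pow_sum]
      refine Finset.prod_congr rfl fun i _ => ?_
      split_ifs
      · rfl
      · simp
    rw [MvPolynomial.aeval_monomial, h, MvPolynomial.algebraMap_eq, MvPolynomial.C_mul_monomial,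
      MvPolynomial.coeff_monomial, MvPolynomial.coeff_monomial]
    split_ifs with hu
    · subst hu; ring
    · simp
  | add p q hp hq => rw [map_add, MvPolynomial.coeff_add, hp, hq, MvPolynomial.coeff_add, mul_add]

lemma kap_top {n r : ℕ} (k : ℕ → ℕ) :
    ((kap n k).sum fun i e => if n - r + 1 ≤ i then e else 0) =
      ∑ j ∈ Finset.Icc (n - r + 1) n, k j := by
  have hs : (kap n k).support ⊆ Finset.Icc 1 n := by
    intro i hi
    rw [Finsupp.mem_support_iff, kap_apply] at hi
    rw [Finset.mem_Icc]
    by_contra h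
    exact hi (if_neg h)
  rw [Finsupp.sum_of_support_subset _ hs _ (by intros; simp), ← Finset.sum_filter]
  have : (Finset.Icc 1 n).filter (fun i => n - r + 1 ≤ i) = Finset.Icc (n - r + 1) n := by
    ext i
    rw [Finset.mem_filter, Finset.mem_Icc, Finset.mem_Icc]
    omega
  rw [this]
  refine Finset.sum_congr rfl fun i hi => ?_
  rw [Finset.mem_Icc] at hi
  rw [kap_apply, if_pos (by omega)]

lemma kap_add {n : ℕ} (k k' : ℕ → ℕ) (A : Finset ℕ) (hA : A ⊆ Finset.Icc 1 n)
    (h : ∀ i, 1 ≤ i → i ≤ n → k' i = (if i ∈ A then 1 else 0) + k i) :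
    kap n k' = (∑ a ∈ A, Finsupp.single a 1) + kap n k := by
  ext i
  rw [Finsupp.add_apply, kap_apply, kap_apply, Finsupp.finsetSum_apply]
  simp only [Finsupp.single_apply, Finset.sum_ite_eq']
  split_ifs with h1 h2 h2
  · rw [h i h1.1 h1.2, if_pos h2]
  · rw [h i h1.1 h1.2, if_neg h2]
  · exact absurd (Finset.mem_Icc.1 (hA h2)) h1
  · rfl

lemma poly_id {n r : ℕ} (hr0 : 1 ≤ r) (hr : r < n) (l : ℕ) (k : ℕ → ℕ) :
    Polynomial.X ^ (∑ j ∈ Finset.Icc (n - r + 1) n, k j) *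
      cCoef n (rect n r (l + 1)) (fun j => j) (fun i => if n - r + 1 ≤ i then k i + 1 else k i) =
    Polynomial.X ^ (r * (l + 1)) *
      cCoef n (rect n r (l + 1)) (fun j => j - (n - r)) (fun i => if i ≤ r then k i + 1 else k i)
      := by
  have i1 : (Finset.univ.image fun c : Fin r => n - r + 1 + c.1) = Finset.Icc (n - r + 1) n := by
    ext i
    simp only [Finset.mem_image, Finset.mem_univ, true_and, Finset.mem_Icc]
    constructor
    · rintro ⟨c, rfl⟩
      have := c.2
      omega
    · intro h
      exact ⟨⟨i - (n - r + 1), by omega⟩, by simp only; omega⟩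
  have i2 : (Finset.univ.image fun c : Fin r => n - r + 1 + c.1 - (n - r)) = Finset.Icc 1 r := by
    ext i
    simp only [Finset.mem_image, Finset.mem_univ, true_and, Finset.mem_Icc]
    constructor
    · rintro ⟨c, rfl⟩
      have := c.2
      omega
    · intro h
      exact ⟨⟨i - 1, by omega⟩, by simp only; omega⟩
  rw [cCoef_coeff hr (fun j => j) _ (fun c c' h => Fin.ext (by simp only at h; omega))
      ((mem_Om _).2 fun c => by have := c.2; omega),
    cCoef_coeff hr (fun j => j - (n - r)) _ (fun c c' h => Fin.ext (by simp only at h; omega))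
      ((mem_Om _).2 fun c => by have := c.2; omega), i1, i2,
    coeff_Wt_succ k _ (Finset.Icc (n - r + 1) n), coeff_Wt_succ k _ (Finset.Icc 1 r)]
  · have h := congrArg (MvPolynomial.coeff (kap n k))
      (main_id hr0 hr qq l (MvPolynomial.X : ℕ → GF))
    have h2 : Yt n r qq l (xq n r qq (MvPolynomial.X : ℕ → GF)) (Finset.Icc (n - r + 1) n) =
        MvPolynomial.aeval (R := Polynomial ℤ) (xq n r qq MvPolynomial.X)
          (Yt n r qq l MvPolynomial.X (Finset.Icc (n - r + 1) n)) := by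
      have h3 := map_Yt (MvPolynomial.aeval (R := Polynomial ℤ)
        (xq n r qq (MvPolynomial.X : ℕ → GF))).toRingHom n r qq l MvPolynomial.X
        (Finset.Icc (n - r + 1) n)
      simp only [AlgHom.toRingHom_eq_coe, RingHom.coe_coe, MvPolynomial.aeval_X] at h3
      rw [h3]
      congr 1
      simp [qq]
    rw [h2, coeff_scale, kap_top] at h
    rw [h, qq, ← map_pow, MvPolynomial.coeff_C_mul, mul_comm r]
  · refine kap_add _ _ _ ?_ fun i _ _ => ?_
    · exact Finset.Icc_subset_Icc le_rfl hr.le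
    · simp only [Finset.mem_Icc]
      split_ifs <;> omega
  · refine kap_add _ _ _ ?_ fun i _ _ => ?_
    · exact Finset.Icc_subset_Icc (by omega) le_rfl
    · simp only [Finset.mem_Icc]
      split_ifs <;> omega

end CO

open CO in
/-- key step of Theorem `rectangular`. For the rectangular
composition `ρ = (0, …, 0, m+1, …, m+1)` with `r` parts equal to `m + 1`,
`c^ρ_{(n-r+1,…,n)}(k₁,…,k_{n-r},k_{n-r+1}+1,…,k_n+1)` equals
`q^{rm-(k_{n-r+1}+⋯+k_n)} · c^ρ_{(1,…,r)}(k₁+1,…,k_r+1,k_{r+1},…,k_n)`,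
as Laurent polynomials in `q`. -/
theorem c_rectangular (n : ℕ) (r : ℕ) (hr1 : 1 ≤ r) (hr2 : r ≤ n - 1)
    (m : ℕ) (hm : 1 ≤ m)
    (rho : ℕ → ℕ) (hrho : rho = fun i => if n - r + 1 ≤ i then m + 1 else 0)
    (k : ℕ → ℕ) :
    Polynomial.toLaurent
        (cCoef n rho (fun j => j) fun i => if n - r + 1 ≤ i then k i + 1 else k i)
      = LaurentPolynomial.T
          ((r * m : ℤ) - ∑ j ∈ Finset.Icc (n - r + 1) n, (k j : ℤ)) *
        Polynomial.toLaurent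
          (cCoef n rho (fun j => j - (n - r)) fun i => if i ≤ r then k i + 1 else k i) := by
  subst hrho
  obtain ⟨l, rfl⟩ : ∃ l, m = l + 1 := ⟨m - 1, by omega⟩
  have h := congrArg Polynomial.toLaurent (poly_id hr1 (by omega : r < n) l k)
  rw [map_mul, map_mul, Polynomial.toLaurent_X_pow, Polynomial.toLaurent_X_pow] at h
  have h2 := congrArg (fun P => LaurentPolynomial.T
    (-((∑ j ∈ Finset.Icc (n - r + 1) n, k j : ℕ) : ℤ)) * P) h
  simp only [← mul_assoc, ← LaurentPolynomial.T_add] at h2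
  rw [neg_add_cancel, LaurentPolynomial.T_zero, one_mul] at h2
  refine h2.trans ?_
  congr 2
  push_cast
  ring
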